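/- arXiv:2205.11351 — 4 statements merged into one kernel-verified Lean document; each statement's English description precedes it below -/
import Mathlib

section
/- Let w ∈ ℂ with Re(w) > 0 and let c ∈ (0,1). Then (1/(2πi)) ∫_{(c)} ( π² ζ(1−s) / (2 cos(πs/2)) ) w^{−s} ds = π² ( 1/(e^{2πw} − 1) − 1/(2πw) ). -/
open Filter Topology MeasureTheory

noncomputable def eulerGamma : ℝ := Real.eulerMascheroniConstant

noncomputable def gamma1 : ℝ :=
  limUnder atTop (fun n : ℕ => ∑ j ∈ Finset.Icc 1 n, Real.log j / j - (Real.log n) ^ 2 / 2)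


open Set in
lemma aux_norm {s w : ℂ} {x : ℝ} (hx : 0 < x) :
    ‖(x : ℂ) ^ (s - 1) * Complex.exp (-(w * x))‖ = x ^ (s.re - 1) * Real.exp (-w.re * x) := by
  rw [norm_mul, Complex.norm_cpow_eq_rpow_re_of_pos hx, Complex.norm_exp]
  simp

open Set in
lemma aux_cont (s w : ℂ) :
    ContinuousOn (fun x : ℝ => (x : ℂ) ^ (s - 1) * Complex.exp (-(w * x))) (Ioi 0) := by
  intro x hx
  apply ContinuousAt.continuousWithinAt
  have := Complex.continuousAt_ofReal_cpow_const x (s-1) (Or.inr (ne_of_gt hx))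
  fun_prop

open Set in
lemma aux_intR {p a : ℝ} (hp : 0 < p) (ha : 0 < a) :
    IntegrableOn (fun x : ℝ => x ^ (p - 1) * Real.exp (-a * x)) (Ioi 0) := by
  have := integrableOn_rpow_mul_exp_neg_mul_rpow (p := 1) (s := p - 1) (b := a)
    (by linarith) one_pos ha
  simpa using this

open Set in
lemma aux_int {s w : ℂ} (hs : 0 < s.re) (hw : 0 < w.re) :
    IntegrableOn (fun x : ℝ => (x : ℂ) ^ (s - 1) * Complex.exp (-(w * x))) (Ioi 0) := by
  refine Integrable.mono' (aux_intR hs hw)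
    ((aux_cont s w).aestronglyMeasurable measurableSet_Ioi) ?_
  filter_upwards [ae_restrict_mem measurableSet_Ioi] with x hx
  exact (aux_norm hx).le

lemma aux_slit {w : ℂ} (hw : 0 < w.re) : w ∈ Complex.slitPlane := Or.inl hw

lemma aux_ne {w : ℂ} (hw : 0 < w.re) : w ≠ 0 := by
  rintro rfl; simp at hw

open Set in
lemma aux_mellin_exp {s w : ℂ} (hs : 0 < s.re) (hw : 0 < w.re) :
    ∫ x : ℝ in Ioi 0, (x : ℂ) ^ (s - 1) * Complex.exp (-(w * x))
      = w ^ (-s) * Complex.Gamma s := by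
  have hU : IsOpen {w : ℂ | 0 < w.re} := isOpen_lt continuous_const Complex.continuous_re
  have hd : DifferentiableOn ℂ (fun w : ℂ => ∫ x : ℝ in Ioi 0,
      (x : ℂ) ^ (s - 1) * Complex.exp (-(w * x))) {w : ℂ | 0 < w.re} := by
    intro v hv
    have hv : 0 < v.re := hv
    have hS : {z : ℂ | v.re / 2 < z.re} ∈ 𝓝 v :=
      (isOpen_lt continuous_const Complex.continuous_re).mem_nhds (by simp; linarith)
    refine ((hasDerivAt_integral_of_dominated_loc_of_deriv_le (𝕜 := ℂ)
      (μ := volume.restrict (Ioi 0))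
      (F := fun (w : ℂ) (x : ℝ) => (x : ℂ) ^ (s - 1) * Complex.exp (-(w * x)))
      (F' := fun (w : ℂ) (x : ℝ) => (x : ℂ) ^ (s - 1) * Complex.exp (-(w * x)) * (-x))
      (bound := fun x => x ^ ((s.re + 1) - 1) * Real.exp (-(v.re / 2) * x))
      hS ?_ ?_ ?_ ?_ ?_ ?_).2).differentiableAt.differentiableWithinAt
    · exact Eventually.of_forall fun w => (aux_cont s w).aestronglyMeasurable measurableSet_Ioi
    · exact aux_int hs hv
    · refine ContinuousOn.aestronglyMeasurable ?_ measurableSet_Ioi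
      exact (aux_cont s v).mul (by fun_prop)
    · filter_upwards [ae_restrict_mem measurableSet_Ioi] with x hx z hz
      have hx : 0 < x := hx
      have hz : v.re / 2 < z.re := hz
      rw [norm_mul, aux_norm hx, norm_neg, Complex.norm_real, Real.norm_of_nonneg hx.le]
      rw [show s.re + 1 - 1 = (s.re - 1) + 1 by ring, Real.rpow_add_one hx.ne']
      rw [mul_right_comm]
      gcongr
    · exact aux_intR (by linarith) (by linarith)
    · filter_upwards [ae_restrict_mem measurableSet_Ioi] with x hx z hz
      have h1 : HasDerivAt (fun z : ℂ => -(z * x)) (-(1 * (x:ℂ))) z :=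
        ((hasDerivAt_id z).mul_const _).neg
      have := (h1.cexp).const_mul ((x : ℂ) ^ (s - 1))
      convert! this using 1
      ring
  have hd2 : DifferentiableOn ℂ (fun w : ℂ => w ^ (-s) * Complex.Gamma s) {w : ℂ | 0 < w.re} := by
    intro v hv
    exact ((differentiableAt_id.cpow_const (aux_slit hv)).mul_const _).differentiableWithinAt
  refine (hd.analyticOnNhd hU).eqOn_of_preconnected_of_frequently_eq (hd2.analyticOnNhd hU)
    (convex_halfSpace_re_gt 0).isPreconnected (z₀ := 1) (by simp) ?_ hw
  have htend : Tendsto (fun n : ℕ => ((1 + 1 / ((n : ℝ) + 1) : ℝ) : ℂ)) atTop (𝓝[≠] 1) := by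
    rw [tendsto_nhdsWithin_iff]
    constructor
    · have := (tendsto_one_div_add_atTop_nhds_zero_nat (𝕜 := ℝ)).const_add 1
      rw [add_zero] at this
      exact_mod_cast (Complex.continuous_ofReal.tendsto 1).comp this
    · refine Eventually.of_forall fun n => ?_
      have : (0:ℝ) < 1 / ((n : ℝ) + 1) := by positivity
      simp only [mem_compl_iff, mem_singleton_iff]
      intro h
      have h2 := Complex.ofReal_eq_one.mp h
      linarith
  refine htend.frequently (Frequently.of_forall fun n => ?_)
  have hr : (0:ℝ) < 1 + 1 / ((n : ℝ) + 1) := by positivity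
  generalize 1 + 1 / ((n : ℝ) + 1) = r at hr
  rw [Complex.integral_cpow_mul_exp_neg_mul_Ioi hs hr, one_div, Complex.inv_cpow, Complex.cpow_neg]
  rw [Complex.arg_ofReal_of_nonneg hr.le]; exact Real.pi_pos.ne

lemma aux_mul_cpow {r : ℝ} (hr : 0 < r) {w : ℂ} (hw : w ≠ 0) (s : ℂ) :
    ((r : ℂ) * w) ^ s = (r : ℂ) ^ s * w ^ s := by
  have hr' : (r : ℂ) ≠ 0 := Complex.ofReal_ne_zero.mpr hr.ne'
  rw [Complex.cpow_def_of_ne_zero (mul_ne_zero hr' hw), Complex.cpow_def_of_ne_zero hr',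
    Complex.cpow_def_of_ne_zero hw, Complex.log_ofReal_mul hr hw, Complex.ofReal_log hr.le,
    ← Complex.exp_add]
  ring_nf

lemma aux_exp_gt {z : ℂ} (hz : 0 < z.re) : Complex.exp z - 1 ≠ 0 := by
  intro h
  have h1 : Complex.exp z = 1 := sub_eq_zero.mp h
  have h2 : ‖Complex.exp z‖ = 1 := by rw [h1]; simp
  rw [Complex.norm_exp, Real.exp_eq_one_iff] at h2
  linarith

lemma aux_re {w : ℂ} (hw : 0 < w.re) {x : ℝ} (hx : 0 < x) : 0 < (w * x).re := by
  simpa using mul_pos hw hx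

open Set in
lemma aux_mellin_E {s w : ℂ} (hs : 1 < s.re) (hw : 0 < w.re) :
    ∫ x : ℝ in Ioi 0, (x : ℂ) ^ (s - 1) * (1 / (Complex.exp (w * x) - 1))
      = w ^ (-s) * Complex.Gamma s * riemannZeta s := by
  have hs0 : 0 < s.re := by linarith
  have hw0 := aux_ne hw
  have hre : ∀ n : ℕ, 0 < ((((n : ℝ) + 1 : ℝ) : ℂ) * w).re := fun n => by
    rw [Complex.re_ofReal_mul]; positivity
  have key := hasSum_integral_of_summable_integral_norm (μ := volume.restrict (Ioi 0))
    (F := fun (n : ℕ) (x : ℝ) =>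
      (x : ℂ) ^ (s - 1) * Complex.exp (-((((n : ℝ) + 1 : ℝ) : ℂ) * w * x)))
    (fun n => aux_int hs0 (hre n)) ?_
  · have e1 : ∫ x : ℝ in Ioi 0, (x : ℂ) ^ (s - 1) * (1 / (Complex.exp (w * x) - 1))
        = ∫ x : ℝ in Ioi 0, ∑' n : ℕ,
          (x : ℂ) ^ (s - 1) * Complex.exp (-((((n : ℝ) + 1 : ℝ) : ℂ) * w * x)) := by
      refine setIntegral_congr_fun measurableSet_Ioi fun x hx => ?_
      rw [tsum_mul_left]
      congr 1
      have hz := aux_re hw hx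
      have hq : ‖Complex.exp (-(w * x))‖ < 1 := by
        rw [Complex.norm_exp, Complex.neg_re]; rw [← Real.exp_zero]; exact Real.exp_lt_exp.mpr (by linarith)
      have h1 := (hasSum_geometric_of_norm_lt_one hq).mul_left (Complex.exp (-(w * x)))
      have h2 := h1.tsum_eq
      have h3 : ∀ n : ℕ, Complex.exp (-(w * x)) * Complex.exp (-(w * x)) ^ n
          = Complex.exp (-((((n : ℝ) + 1 : ℝ) : ℂ) * w * x)) := fun n => by
        rw [← Complex.exp_nat_mul, ← Complex.exp_add]
        congr 1
        push_cast
        ring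
      simp_rw [h3] at h2
      rw [h2]
      have h4 := aux_exp_gt hz
      rw [Complex.exp_neg]
      have h5 := Complex.exp_ne_zero (w * x)
      have h6 : 1 - (Complex.exp (w * x))⁻¹ ≠ 0 := by
        intro h
        apply h4
        field_simp at h
        simpa using h
      field_simp
    rw [e1, ← key.tsum_eq, zeta_eq_tsum_one_div_nat_add_one_cpow hs, ← tsum_mul_left]
    refine tsum_congr fun n => ?_
    rw [aux_mellin_exp hs0 (hre n), aux_mul_cpow (by positivity) hw0, Complex.cpow_neg _ s]
    push_cast
    ring
  · have h1 : ∀ n : ℕ, ∫ x : ℝ in Ioi 0,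
        ‖(x : ℂ) ^ (s - 1) * Complex.exp (-((((n : ℝ) + 1 : ℝ) : ℂ) * w * x))‖
        = ((1 / w.re) ^ s.re * Real.Gamma s.re) * (1 / ((n + 1 : ℕ) : ℝ) ^ s.re) := fun n => by
      have := Real.integral_rpow_mul_exp_neg_mul_Ioi hs0 (hre n)
      rw [Complex.re_ofReal_mul] at this
      rw [one_div, Real.inv_rpow (by positivity), Real.mul_rpow (by positivity) hw.le] at this
      rw [one_div, Real.inv_rpow hw.le]
      push_cast
      rw [show (w.re ^ s.re)⁻¹ * Real.Gamma s.re * (1 / ((n : ℝ) + 1) ^ s.re)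
        = (((n : ℝ) + 1) ^ s.re * w.re ^ s.re)⁻¹ * Real.Gamma s.re by
          rw [mul_inv]; ring, ← this]
      refine setIntegral_congr_fun measurableSet_Ioi fun x hx => ?_
      have h := aux_norm (s := s) (w := (((n : ℝ) + 1 : ℝ) : ℂ) * w) hx
      rw [Complex.re_ofReal_mul] at h
      push_cast at h
      rw [h]
      ring_nf
    simp_rw [h1]
    apply Summable.mul_left
    exact (summable_nat_add_iff 1).mpr (Real.summable_one_div_nat_rpow.mpr hs)

lemma aux_f_bound {z : ℂ} (hz : ‖z‖ ≤ 1 / 2) : ‖1 / (Complex.exp z - 1) - 1 / z‖ ≤ 2 := by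
  rcases eq_or_ne z 0 with rfl | h0
  · simp
  have hp : 0 < ‖z‖ := norm_pos_iff.mpr h0
  have h1 := Complex.norm_exp_sub_one_sub_id_le (x := z) (by linarith)
  have h2 : ‖z‖ / 2 ≤ ‖Complex.exp z - 1‖ := by
    have h3 := norm_sub_norm_le z (-(Complex.exp z - 1 - z))
    rw [norm_neg] at h3
    have h4 : z - -(Complex.exp z - 1 - z) = Complex.exp z - 1 := by ring
    rw [h4] at h3
    nlinarith
  have h5 : Complex.exp z - 1 ≠ 0 := by
    intro h
    rw [h, norm_zero] at h2
    linarith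
  rw [div_sub_div _ _ h5 h0, norm_div, norm_mul, div_le_iff₀ (by positivity)]
  rw [show 1 * z - (Complex.exp z - 1) * 1 = -(Complex.exp z - 1 - z) by ring, norm_neg]
  nlinarith

lemma aux_g_bound {z : ℂ} (hz : ‖z‖ ≤ 1) : ‖(Complex.exp (-z) - 1) / z‖ ≤ 2 := by
  rcases eq_or_ne z 0 with rfl | h0
  · simp
  have hp : 0 < ‖z‖ := norm_pos_iff.mpr h0
  have := Complex.norm_exp_sub_one_le (x := -z) (by simpa using hz)
  rw [norm_neg] at this
  rw [norm_div, div_le_iff₀ hp]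
  exact this

noncomputable def auxF (w : ℂ) (x : ℝ) : ℂ := 1 / (Complex.exp (w * x) - 1) - 1 / (w * x)
noncomputable def auxG (w : ℂ) (x : ℝ) : ℂ := (Complex.exp (-(w * x)) - 1) / (w * x)
noncomputable def auxH (w : ℂ) (x : ℝ) : ℂ :=
  1 / (Complex.exp (w * x) - 1) - Complex.exp (-(w * x)) / (w * x)

lemma aux_H_eq (w : ℂ) (x : ℝ) : auxH w x = auxF w x - auxG w x := by
  unfold auxH auxF auxG; ring

lemma aux_F_eq (w : ℂ) (x : ℝ) : auxF w x = auxH w x + auxG w x := by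
  unfold auxH auxF auxG; ring

open Set in
lemma aux_F_cont {w : ℂ} (hw : 0 < w.re) : ContinuousOn (auxF w) (Ioi 0) := by
  unfold auxF
  refine ContinuousOn.sub (ContinuousOn.div (by fun_prop) (by fun_prop) ?_)
    (ContinuousOn.div (by fun_prop) (by fun_prop) ?_)
  · intro x hx; exact aux_exp_gt (aux_re hw hx)
  · intro x hx; exact aux_ne (aux_re hw hx)

open Set in
lemma aux_G_cont {w : ℂ} (hw : 0 < w.re) : ContinuousOn (auxG w) (Ioi 0) := by
  unfold auxG
  refine (ContinuousOn.div (by fun_prop) (by fun_prop) ?_)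
  · intro x hx; exact aux_ne (aux_re hw hx)

open Set in
lemma aux_H_cont {w : ℂ} (hw : 0 < w.re) : ContinuousOn (auxH w) (Ioi 0) := by
  have : auxH w = fun x => auxF w x - auxG w x := funext (aux_H_eq w)
  rw [this]
  exact (aux_F_cont hw).sub (aux_G_cont hw)

lemma aux_small (w : ℂ) {ε : ℝ} (hε : 0 < ε) : ∀ᶠ x : ℝ in 𝓝[>] 0, ‖w * x‖ ≤ ε := by
  have : Tendsto (fun x : ℝ => ‖w * x‖) (𝓝 0) (𝓝 0) := by
    have h : Continuous (fun x : ℝ => ‖w * x‖) := by fun_prop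
    simpa using h.tendsto 0
  exact (this.mono_left nhdsWithin_le_nhds).eventually_le_const hε

lemma aux_F_zero (w : ℂ) : auxF w =O[𝓝[>] 0] (fun x : ℝ => x ^ (-(0:ℝ))) := by
  refine Asymptotics.IsBigO.of_bound 2 ?_
  filter_upwards [aux_small w (ε := 1/2) (by norm_num)] with x hx
  simpa [auxF] using aux_f_bound hx

lemma aux_G_zero (w : ℂ) : auxG w =O[𝓝[>] 0] (fun x : ℝ => x ^ (-(0:ℝ))) := by
  refine Asymptotics.IsBigO.of_bound 2 ?_
  filter_upwards [aux_small w (ε := 1) (by norm_num)] with x hx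
  simpa [auxG] using aux_g_bound hx

lemma aux_H_zero (w : ℂ) : auxH w =O[𝓝[>] 0] (fun x : ℝ => x ^ (-(0:ℝ))) := by
  have : auxH w = fun x => auxF w x - auxG w x := funext (aux_H_eq w)
  rw [this]
  exact (aux_F_zero w).sub (aux_G_zero w)

lemma aux_G_top {w : ℂ} (hw : 0 < w.re) : auxG w =O[atTop] (fun x : ℝ => x ^ (-(1:ℝ))) := by
  refine Asymptotics.IsBigO.of_bound (2 / ‖w‖) ?_
  filter_upwards [eventually_gt_atTop 0] with x hx
  unfold auxG
  have hn : 0 < ‖w‖ := norm_pos_iff.mpr (aux_ne hw)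
  rw [Real.rpow_neg_one, norm_inv, Real.norm_of_nonneg hx.le, norm_div, norm_mul, Complex.norm_real,
    Real.norm_of_nonneg hx.le, div_mul_eq_div_div, div_eq_mul_inv, div_eq_mul_inv _ ‖w‖,
    div_eq_mul_inv 2]
  gcongr
  refine (norm_sub_le _ _).trans ?_
  have : ‖Complex.exp (-(w * x))‖ ≤ 1 := by
    rw [Complex.norm_exp, Complex.neg_re]
    exact Real.exp_le_one_iff.mpr (by linarith [aux_re hw hx])
  simp only [norm_one]
  linarith

lemma aux_H_top {w : ℂ} (hw : 0 < w.re) :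
    auxH w =O[atTop] (fun x : ℝ => Real.exp (-w.re * x)) := by
  have hn : 0 < ‖w‖ := norm_pos_iff.mpr (aux_ne hw)
  refine Asymptotics.IsBigO.of_bound (2 + 1 / ‖w‖) ?_
  have ht : Tendsto (fun x : ℝ => Real.exp (w.re * x)) atTop atTop :=
    Real.tendsto_exp_atTop.comp (tendsto_id.const_mul_atTop hw)
  filter_upwards [eventually_ge_atTop 1, ht.eventually_ge_atTop 2] with x hx hx2
  have hx0 : 0 < x := by linarith
  unfold auxH
  rw [Real.norm_of_nonneg (Real.exp_pos _).le, add_mul]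
  refine (norm_sub_le _ _).trans (add_le_add ?_ ?_)
  · have h1 : Real.exp (w.re * x) - 1 ≤ ‖Complex.exp (w * x) - 1‖ := by
      have := norm_sub_norm_le (Complex.exp (w * x)) 1
      rw [Complex.norm_exp] at this
      simpa using this
    have h2 : Real.exp (w.re * x) / 2 ≤ ‖Complex.exp (w * x) - 1‖ := by linarith
    rw [norm_div, norm_one, neg_mul, Real.exp_neg]
    calc 1 / ‖Complex.exp (w * x) - 1‖ ≤ 1 / (Real.exp (w.re * x) / 2) :=
          one_div_le_one_div_of_le (by positivity) h2
      _ = _ := by field_simp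
  · rw [norm_div, Complex.norm_exp, norm_mul, Complex.norm_real, Real.norm_of_nonneg hx0.le]
    have : (-(w * x)).re = -w.re * x := by simp
    rw [this, div_eq_mul_inv, mul_comm, ← one_div]
    gcongr
    nlinarith

lemma aux_F_top {w : ℂ} (hw : 0 < w.re) : auxF w =O[atTop] (fun x : ℝ => x ^ (-(1:ℝ))) := by
  have : auxF w = fun x => auxH w x + auxG w x := funext (aux_F_eq w)
  rw [this]
  exact ((aux_H_top hw).trans (isLittleO_exp_neg_mul_rpow_atTop hw _).isBigO).add (aux_G_top hw)

open Set in
lemma aux_loc {f : ℝ → ℂ} (hf : ContinuousOn f (Ioi 0)) : LocallyIntegrableOn f (Ioi 0) :=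
  hf.locallyIntegrableOn measurableSet_Ioi

lemma aux_F_conv {s w : ℂ} (hw : 0 < w.re) (hs : 0 < s.re) (hs1 : s.re < 1) :
    MellinConvergent (auxF w) s :=
  mellinConvergent_of_isBigO_rpow (aux_loc (aux_F_cont hw)) (aux_F_top hw) hs1 (aux_F_zero w) hs

lemma aux_G_conv {s w : ℂ} (hw : 0 < w.re) (hs : 0 < s.re) (hs1 : s.re < 1) :
    MellinConvergent (auxG w) s :=
  mellinConvergent_of_isBigO_rpow (aux_loc (aux_G_cont hw)) (aux_G_top hw) hs1 (aux_G_zero w) hs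

lemma aux_H_conv {s w : ℂ} (hw : 0 < w.re) (hs : 0 < s.re) :
    MellinConvergent (auxH w) s :=
  mellinConvergent_of_isBigO_rpow_exp hw (aux_loc (aux_H_cont hw)) (aux_H_top hw) (aux_H_zero w) hs

lemma aux_F_diff {s w : ℂ} (hw : 0 < w.re) (hs : 0 < s.re) (hs1 : s.re < 1) :
    DifferentiableAt ℂ (mellin (auxF w)) s :=
  mellin_differentiableAt_of_isBigO_rpow
    (aux_loc (aux_F_cont hw)) (aux_F_top hw) hs1 (aux_F_zero w) hs

lemma aux_H_diff {s w : ℂ} (hw : 0 < w.re) (hs : 0 < s.re) :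
    DifferentiableAt ℂ (mellin (auxH w)) s :=
  mellin_differentiableAt_of_isBigO_rpow_exp hw
    (aux_loc (aux_H_cont hw)) (aux_H_top hw) (aux_H_zero w) hs

open Set in
lemma aux_mellin_G {s w : ℂ} (hw : 0 < w.re) (hs : 0 < s.re) (hs1 : s.re < 1) :
    mellin (auxG w) s = w ^ (-s) * (Complex.Gamma s / (s - 1)) := by
  have hw0 := aux_ne hw
  have hsne : s - 1 ≠ 0 := by
    intro h
    have := congrArg Complex.re h
    simp at this
    linarith
  have hG := aux_G_conv hw hs hs1
  have hE := aux_int hs hw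
  have e1 : ∀ x ∈ Ioi (0:ℝ), (x : ℂ) ^ (s - 2) * (Complex.exp (-(w * x)) - 1)
      = w * ((x : ℂ) ^ (s - 1) • auxG w x) := fun x hx => by
    have hx0 : (x : ℂ) ≠ 0 := Complex.ofReal_ne_zero.mpr (ne_of_gt hx)
    have : (x : ℂ) ^ (s - 1) = (x : ℂ) ^ (s - 2) * x := by
      rw [show s - 1 = (s - 2) + 1 by ring, Complex.cpow_add _ _ hx0, Complex.cpow_one]
    rw [this, auxG, smul_eq_mul]
    field_simp
  have e2 : ∀ x ∈ Ioi (0:ℝ), (x : ℂ) ^ (s - 1) / (s - 1) * (-w * Complex.exp (-(w * x)))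
      = -(w / (s - 1)) * ((x : ℂ) ^ (s - 1) * Complex.exp (-(w * x))) := fun x hx => by
    ring
  have i1 : IntegrableOn (fun x : ℝ => w * ((x : ℂ) ^ (s - 1) • auxG w x)) (Ioi 0) :=
    Integrable.const_mul hG w
  have i2 : IntegrableOn (fun x : ℝ => -(w / (s - 1)) *
      ((x : ℂ) ^ (s - 1) * Complex.exp (-(w * x)))) (Ioi 0) :=
    Integrable.const_mul hE _
  have key := integral_Ioi_deriv_mul_eq_sub (A := ℂ) (a := 0) (a' := 0) (b' := 0)
    (u := fun x : ℝ => (x : ℂ) ^ (s - 1) / (s - 1)) (u' := fun x : ℝ => (x : ℂ) ^ (s - 2))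
    (v := fun x : ℝ => Complex.exp (-(w * x)) - 1)
    (v' := fun x : ℝ => -w * Complex.exp (-(w * x))) ?_ ?_ ?_ ?_ ?_
  · have e3 : ∫ x : ℝ in Ioi 0, ((x : ℂ) ^ (s - 2) * (Complex.exp (-(w * x)) - 1)
        + (x : ℂ) ^ (s - 1) / (s - 1) * (-w * Complex.exp (-(w * x))))
        = ∫ x : ℝ in Ioi 0, (w * ((x : ℂ) ^ (s - 1) • auxG w x)
          + -(w / (s - 1)) * ((x : ℂ) ^ (s - 1) * Complex.exp (-(w * x)))) :=
      setIntegral_congr_fun measurableSet_Ioi fun x hx => by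
        rw [e1 x hx, e2 x hx]
    rw [e3, integral_add i1 i2, integral_const_mul, integral_const_mul, aux_mellin_exp hs hw] at key
    unfold mellin
    apply mul_left_cancel₀ hw0
    linear_combination key
  · intro x hx
    have := hasDerivAt_ofReal_cpow_const' (x := x) (ne_of_gt hx) (r := s - 2) (by
      intro h; apply hsne; linear_combination h)
    rw [show s - 2 + 1 = s - 1 by ring] at this
    exact this
  · intro x hx
    have h0 : HasDerivAt (fun x : ℝ => (x : ℂ)) 1 x := Complex.ofRealCLM.hasDerivAt
    have h1 := ((h0.const_mul w).neg.cexp).sub_const 1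
    convert! h1 using 1
    simp only [Pi.neg_apply]
    ring
  · refine (i1.add i2).congr_fun (fun x hx => ?_) measurableSet_Ioi
    simp only [Pi.add_apply, Pi.mul_apply]
    rw [e1 x hx, e2 x hx]
  · have t1 : Tendsto (fun x : ℝ => ‖w / (s - 1)‖ * (x ^ s.re * 2)) (𝓝[>] 0) (𝓝 0) := by
      have : Tendsto (fun x : ℝ => x ^ s.re) (𝓝 0) (𝓝 0) := by
        have := (Real.continuousAt_rpow_const 0 s.re (Or.inr hs.le)).tendsto
        rwa [Real.zero_rpow hs.ne'] at this
      have := ((this.mono_left (nhdsWithin_le_nhds (s := Ioi 0))).mul_const 2).const_mul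
        ‖w / (s - 1)‖
      simpa using this
    refine squeeze_zero_norm' ?_ t1
    filter_upwards [aux_small w one_pos, self_mem_nhdsWithin] with x hx hx0
    have hx0 : 0 < x := hx0
    have hxc : (x : ℂ) ≠ 0 := Complex.ofReal_ne_zero.mpr hx0.ne'
    have h2 := aux_g_bound hx
    have : ((fun x : ℝ => (x : ℂ) ^ (s - 1) / (s - 1)) *
        fun x : ℝ => Complex.exp (-(w * x)) - 1) x
        = w / (s - 1) * ((x : ℂ) ^ s * ((Complex.exp (-(w * x)) - 1) / (w * x))) := by
      simp only [Pi.mul_apply]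
      rw [Complex.cpow_sub _ _ hxc, Complex.cpow_one]
      field_simp
    rw [this, norm_mul, norm_mul, Complex.norm_cpow_eq_rpow_re_of_pos hx0]
    gcongr
  · have t1 : Tendsto (fun x : ℝ => x ^ (-(1 - s.re)) / ‖s - 1‖ * 2) atTop (𝓝 0) := by
      have := ((tendsto_rpow_neg_atTop (y := 1 - s.re) (by linarith)).div_const ‖s - 1‖).mul_const 2
      simpa using this
    refine squeeze_zero_norm' ?_ t1
    filter_upwards [eventually_gt_atTop 0] with x hx
    simp only [Pi.mul_apply]
    rw [norm_mul, norm_div, Complex.norm_cpow_eq_rpow_re_of_pos hx, Complex.sub_re, Complex.one_re,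
      neg_sub]
    gcongr
    refine (norm_sub_le _ _).trans ?_
    have : ‖Complex.exp (-(w * x))‖ ≤ 1 := by
      rw [Complex.norm_exp, Complex.neg_re]
      exact Real.exp_le_one_iff.mpr (by linarith [aux_re hw hx])
    simp only [norm_one]
    linarith

open Set in
lemma aux_mellin_H_right {s w : ℂ} (hw : 0 < w.re) (hs : 1 < s.re) :
    mellin (auxH w) s
      = w ^ (-s) * (Complex.Gamma s * riemannZeta s - Complex.Gamma s / (s - 1)) := by
  have hw0 := aux_ne hw
  have hs0 : 0 < s.re := by linarith
  have hs1 : 0 < (s - 1).re := by simp; linarith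
  have hsne : s - 1 ≠ 0 := aux_ne hs1
  have hH := aux_H_conv hw hs0
  have hE := aux_int hs1 hw
  have hE' : IntegrableOn (fun x : ℝ => w⁻¹ *
      ((x : ℂ) ^ (s - 1 - 1) * Complex.exp (-(w * x)))) (Ioi 0) :=
    Integrable.const_mul hE _
  have e1 : ∀ x ∈ Ioi (0:ℝ), (x : ℂ) ^ (s - 1) * (1 / (Complex.exp (w * x) - 1))
      = (x : ℂ) ^ (s - 1) • auxH w x
        + w⁻¹ * ((x : ℂ) ^ (s - 1 - 1) * Complex.exp (-(w * x))) := fun x hx => by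
    have hx0 : (x : ℂ) ≠ 0 := Complex.ofReal_ne_zero.mpr (ne_of_gt hx)
    have h9 : (x : ℂ) ^ (s - 1) = (x : ℂ) ^ (s - 1 - 1) * x := by
      rw [Complex.cpow_sub (s - 1) 1 hx0, Complex.cpow_one]
      field_simp
    rw [h9, auxH, smul_eq_mul]
    generalize (x : ℂ) ^ (s - 1 - 1) = y
    field_simp
    ring
  have h1 := aux_mellin_E hs hw
  rw [setIntegral_congr_fun measurableSet_Ioi e1, integral_add hH hE', integral_const_mul,
    aux_mellin_exp hs1 hw] at h1
  have h2 : Complex.Gamma s = (s - 1) * Complex.Gamma (s - 1) := by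
    have := Complex.Gamma_add_one (s - 1) hsne
    rwa [sub_add_cancel] at this
  have h3 : w⁻¹ * w ^ (-(s - 1)) = w ^ (-s) := by
    rw [show -(s-1) = -s + 1 by ring, Complex.cpow_add _ _ hw0, Complex.cpow_one]
    field_simp
  have h4 : Complex.Gamma s / (s - 1) = Complex.Gamma (s - 1) := by
    rw [h2]; field_simp
  rw [h4]
  unfold mellin
  rw [← mul_assoc, h3] at h1
  linear_combination h1

def auxU : Set ℂ :=
  ({z | 0 < z.re} ∩ {z | z.re < 1}) ∪ ({z | 0 < z.re} ∩ {z | 0 < z.im}) ∪ {z | 1 < z.re}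

lemma auxU_open : IsOpen auxU :=
  (((isOpen_lt continuous_const Complex.continuous_re).inter
    (isOpen_lt Complex.continuous_re continuous_const)).union
    ((isOpen_lt continuous_const Complex.continuous_re).inter
    (isOpen_lt continuous_const Complex.continuous_im))).union
    (isOpen_lt continuous_const Complex.continuous_re)

lemma auxU_conn : IsPreconnected auxU := by
  refine IsPreconnected.union (2 + Complex.I) ?_ ?_
    (IsPreconnected.union (1/2 + Complex.I) ?_ ?_
      ((convex_halfSpace_re_gt 0).inter (convex_halfSpace_re_lt 1)).isPreconnected
      ((convex_halfSpace_re_gt 0).inter (convex_halfSpace_im_gt 0)).isPreconnected)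
      (convex_halfSpace_re_gt 1).isPreconnected
  · right; simp
  · simp
  · simp; norm_num
  · simp

lemma auxU_pos : ∀ z ∈ auxU, 0 < z.re ∧ z ≠ 1 := by
  rintro z ((⟨h1, h2⟩ | ⟨h1, h2⟩) | h)
  · exact ⟨h1, by rintro rfl; simp at h2⟩
  · exact ⟨h1, by rintro rfl; simp at h2⟩
  · have h : 1 < z.re := h
    exact ⟨by linarith, by rintro rfl; simp at h⟩

lemma aux_mellin_H {s w : ℂ} (hw : 0 < w.re) (hs : 0 < s.re) (hs1 : s.re < 1) :
    mellin (auxH w) s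
      = w ^ (-s) * (Complex.Gamma s * riemannZeta s - Complex.Gamma s / (s - 1)) := by
  have hw0 := aux_ne hw
  have hd1 : DifferentiableOn ℂ (mellin (auxH w)) auxU := fun z hz =>
    (aux_H_diff hw (auxU_pos z hz).1).differentiableWithinAt
  have hd2 : DifferentiableOn ℂ (fun s => w ^ (-s) *
      (Complex.Gamma s * riemannZeta s - Complex.Gamma s / (s - 1))) auxU := fun z hz => by
    obtain ⟨h1, h2⟩ := auxU_pos z hz
    have g1 : DifferentiableAt ℂ Complex.Gamma z := Complex.differentiableAt_Gamma z (by
      rintro m rfl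
      simp at h1
      have : (0:ℝ) ≤ m := Nat.cast_nonneg m
      linarith)
    have g2 := differentiableAt_riemannZeta h2
    have g3 : DifferentiableAt ℂ (fun s : ℂ => w ^ (-s)) z :=
      (differentiableAt_id.neg).const_cpow (Or.inl hw0)
    have g4 : DifferentiableAt ℂ (fun s : ℂ => s - 1) z := by fun_prop
    have g5 : DifferentiableAt ℂ (fun s => Complex.Gamma s * riemannZeta s) z := g1.fun_mul g2
    have g6 : DifferentiableAt ℂ (fun s => Complex.Gamma s / (s - 1)) z :=
      g1.fun_div g4 (sub_ne_zero.mpr h2)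
    exact (g3.fun_mul (g5.fun_sub g6)).differentiableWithinAt
  have h2 : (2 : ℂ) ∈ auxU := Or.inr (by simp)
  have hev : mellin (auxH w) =ᶠ[𝓝 2] (fun s => w ^ (-s) *
      (Complex.Gamma s * riemannZeta s - Complex.Gamma s / (s - 1))) := by
    have : {z : ℂ | 1 < z.re} ∈ 𝓝 (2 : ℂ) :=
      (isOpen_lt continuous_const Complex.continuous_re).mem_nhds (by simp)
    filter_upwards [this] with z hz
    exact aux_mellin_H_right hw hz
  have hfin := (hd1.analyticOnNhd auxU_open).eqOn_of_preconnected_of_eventuallyEq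
    (hd2.analyticOnNhd auxU_open) auxU_conn h2 hev
  have hsU : s ∈ auxU := Or.inl (Or.inl ⟨hs, hs1⟩)
  exact hfin hsU

lemma aux_mellin_F {s w : ℂ} (hw : 0 < w.re) (hs : 0 < s.re) (hs1 : s.re < 1) :
    mellin (auxF w) s = w ^ (-s) * (Complex.Gamma s * riemannZeta s) := by
  have h : mellin (auxF w) s = mellin (auxH w) s + mellin (auxG w) s := by
    unfold mellin
    rw [← integral_add (aux_H_conv hw hs) (aux_G_conv hw hs hs1)]
    congr 1
    funext x
    rw [aux_F_eq, smul_add]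
  rw [h, aux_mellin_H hw hs hs1, aux_mellin_G hw hs hs1]
  ring

lemma aux_F_norm (w : ℂ) (c : ℝ) :
    ∃ K : ℝ, 0 ≤ K ∧ ∀ t : ℝ, ‖mellin (auxF w) (c + t * Complex.I)‖ ≤ K := by
  refine ⟨∫ x : ℝ in Set.Ioi 0, x ^ (c - 1) * ‖auxF w x‖,
    setIntegral_nonneg measurableSet_Ioi (fun x hx => ?_), fun t => ?_⟩
  · have hx : 0 < x := hx
    positivity
  unfold mellin
  refine (norm_integral_le_integral_norm _).trans (le_of_eq ?_)
  refine setIntegral_congr_fun measurableSet_Ioi fun x hx => ?_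
  rw [norm_smul, Complex.norm_cpow_eq_rpow_re_of_pos hx]
  simp

lemma aux_int_exp {b : ℝ} (hb : 0 < b) : Integrable (fun t : ℝ => Real.exp (-b * |t|)) := by
  rw [← integrableOn_univ, ← Set.Iic_union_Ioi (a := (0:ℝ))]
  refine IntegrableOn.union ?_ ?_
  · refine (integrableOn_exp_mul_Iic hb 0).congr_fun (fun x hx => ?_) measurableSet_Iic
    have hx : x ≤ 0 := hx
    rw [abs_of_nonpos hx, neg_mul_neg]
  · refine (integrableOn_exp_mul_Ioi (neg_lt_zero.mpr hb) 0).congr_fun (fun x hx => ?_)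
      measurableSet_Ioi
    have hx : 0 < x := hx
    rw [abs_of_pos hx]

lemma aux_vert {w : ℂ} (hw : 0 < w.re) {c : ℝ} (hc : 0 < c) (hc1 : c < 1) :
    Complex.VerticalIntegrable (mellin (auxF w)) c := by
  have hw0 := aux_ne hw
  have hre : ∀ t : ℝ, ((c : ℂ) + t * Complex.I).re = c := fun t => by simp
  have him : ∀ t : ℝ, ((c : ℂ) + t * Complex.I).im = t := fun t => by simp
  have harg : |w.arg| < Real.pi / 2 := Complex.abs_arg_lt_pi_div_two_iff.mpr (Or.inl hw)
  obtain ⟨θ, h1, h2⟩ := exists_between harg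
  have hθ0 : 0 < θ := (abs_nonneg _).trans_lt h1
  -- bound for a given angle
  have hb : ∀ φ : ℝ, |φ| < Real.pi / 2 → ∃ K : ℝ, 0 ≤ K ∧ ∀ t : ℝ,
      ‖Complex.Gamma (c + t * Complex.I) * riemannZeta (c + t * Complex.I)‖
        ≤ K * Real.exp (-φ * t) := by
    intro φ hφ
    rw [abs_lt] at hφ
    have hv : 0 < (Complex.exp (φ * Complex.I)).re := by
      rw [Complex.exp_ofReal_mul_I_re]
      exact Real.cos_pos_of_mem_Ioo ⟨by linarith, hφ.2⟩
    obtain ⟨K, hK, h⟩ := aux_F_norm (Complex.exp (φ * Complex.I)) c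
    refine ⟨K, hK, fun t => ?_⟩
    have h3 := h t
    rw [aux_mellin_F hv (by rw [hre]; exact hc) (by rw [hre]; exact hc1), norm_mul,
      Complex.norm_cpow_of_ne_zero (Complex.exp_ne_zero _), Complex.norm_exp_ofReal_mul_I,
      Complex.neg_im, him, Real.one_rpow,
      Complex.arg_exp_mul_I, toIocMod_eq_self _ |>.mpr] at h3
    · rw [neg_mul, Real.exp_neg, ← div_eq_mul_inv, le_div_iff₀ (Real.exp_pos _)]
      rw [mul_neg, Real.exp_neg] at h3
      simpa [mul_comm] using h3
    · constructor
      · linarith [Real.pi_pos]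
      · linarith [Real.pi_pos]
  obtain ⟨K1, hK1, hb1⟩ := hb θ (by rwa [abs_of_pos hθ0])
  obtain ⟨K2, hK2, hb2⟩ := hb (-θ) (by rwa [abs_neg, abs_of_pos hθ0])
  have hcont : Continuous (fun t : ℝ => mellin (auxF w) (c + t * Complex.I)) := by
    rw [continuous_iff_continuousAt]
    intro t
    have hd := (aux_F_diff hw (s := c + t * Complex.I)
      (by rw [hre]; exact hc) (by rw [hre]; exact hc1)).continuousAt
    exact ContinuousAt.comp (f := fun t : ℝ => (c : ℂ) + t * Complex.I) hd (by fun_prop)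
  refine Integrable.mono' (g := fun t : ℝ =>
    ‖w‖ ^ (-c) * (K1 + K2) * Real.exp (-(θ - |w.arg|) * |t|))
    ((aux_int_exp (by linarith)).const_mul _) hcont.aestronglyMeasurable
    (Eventually.of_forall fun t => ?_)
  rw [aux_mellin_F hw (by rw [hre]; exact hc) (by rw [hre]; exact hc1), norm_mul,
    Complex.norm_cpow_of_ne_zero hw0, Complex.neg_im, Complex.neg_re, him, hre, div_eq_mul_inv,
    ← Real.exp_neg]
  have k1 : ‖Complex.Gamma (c + t * Complex.I) * riemannZeta (c + t * Complex.I)‖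
      ≤ (K1 + K2) * Real.exp (-θ * |t|) := by
    rw [add_mul]
    rcases le_total 0 t with ht | ht
    · rw [abs_of_nonneg ht]
      have := hb1 t
      have : 0 ≤ K2 * Real.exp (-θ * t) := by positivity
      linarith
    · rw [abs_of_nonpos ht]
      have := hb2 t
      have : 0 ≤ K1 * Real.exp (-θ * -t) := by positivity
      rw [neg_mul_neg, ← neg_neg θ, neg_neg θ] at *
      simp only [neg_neg] at *
      linarith
  have k2 : -(w.arg * -t) ≤ |w.arg| * |t| := by
    rw [← abs_mul, mul_neg, neg_neg]; exact le_abs_self _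
  calc ‖w‖ ^ (-c) * Real.exp (-(w.arg * -t)) *
        ‖Complex.Gamma (c + t * Complex.I) * riemannZeta (c + t * Complex.I)‖
      ≤ ‖w‖ ^ (-c) * Real.exp (|w.arg| * |t|) * ((K1 + K2) * Real.exp (-θ * |t|)) := by
        gcongr
    _ = ‖w‖ ^ (-c) * (K1 + K2) * (Real.exp (|w.arg| * |t|) * Real.exp (-θ * |t|)) := by ring
    _ = _ := by rw [← Real.exp_add]; ring_nf

theorem stmt13 (w : ℂ) (hw : 0 < w.re) (c : ℝ) (hc : 0 < c) (hc1 : c < 1) :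
    (1 / (2 * (Real.pi : ℂ))) * (∫ t : ℝ,
        ((Real.pi : ℂ) ^ 2 * riemannZeta (1 - ((c : ℂ) + (t : ℂ) * Complex.I))
            / (2 * Complex.cos ((Real.pi : ℂ) * ((c : ℂ) + (t : ℂ) * Complex.I) / 2)))
          * w ^ (-((c : ℂ) + (t : ℂ) * Complex.I))) =
      (Real.pi : ℂ) ^ 2 * (1 / (Complex.exp (2 * (Real.pi : ℂ) * w) - 1)
        - 1 / (2 * (Real.pi : ℂ) * w)) := by
  have hp : 0 < 2 * Real.pi := by positivity
  have hw0 := aux_ne hw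
  have hv : 0 < (((2 * Real.pi : ℝ) : ℂ) * w).re := by
    rw [Complex.re_ofReal_mul]; positivity
  have key := mellinInv_mellin_eq c (auxF (((2 * Real.pi : ℝ) : ℂ) * w)) one_pos
    (aux_F_conv hv (by simpa using hc) (by simpa using hc1)) (aux_vert hv hc hc1)
    ((aux_F_cont hv).continuousAt (Ioi_mem_nhds one_pos))
  have hI : ∀ t : ℝ, ((Real.pi : ℂ) ^ 2 * riemannZeta (1 - ((c : ℂ) + (t : ℂ) * Complex.I))
            / (2 * Complex.cos ((Real.pi : ℂ) * ((c : ℂ) + (t : ℂ) * Complex.I) / 2)))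
          * w ^ (-((c : ℂ) + (t : ℂ) * Complex.I))
      = (Real.pi : ℂ) ^ 2 * mellin (auxF (((2 * Real.pi : ℝ) : ℂ) * w))
        ((c : ℂ) + (t : ℂ) * Complex.I) := by
    intro t
    have hre : ((c : ℂ) + t * Complex.I).re = c := by simp
    generalize (c : ℂ) + t * Complex.I = s at hre
    rw [← hre] at hc hc1
    have hcos : Complex.cos (Real.pi * s / 2) ≠ 0 := by
      rw [Complex.cos_ne_zero_iff]
      intro k h
      have h2 : s = 2 * k + 1 := by
        have : (Real.pi : ℂ) ≠ 0 := by exact_mod_cast Real.pi_ne_zero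
        apply mul_left_cancel₀ this
        linear_combination 2 * h
      rw [h2] at hc hc1
      have e : (2 * (k : ℂ) + 1).re = ((2 * k + 1 : ℤ) : ℝ) := by simp
      rw [e] at hc hc1
      have hc' : (0 : ℤ) < 2 * k + 1 := by exact_mod_cast hc
      have hc1' : 2 * k + 1 < (1 : ℤ) := by exact_mod_cast hc1
      omega
    rw [aux_mellin_F hv hc hc1, aux_mul_cpow hp hw0, riemannZeta_one_sub]
    · push_cast
      field_simp
    · rintro n rfl
      simp at hc
      have : (0:ℝ) ≤ n := Nat.cast_nonneg n
      linarith
    · rintro rfl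
      simp at hc1
  simp_rw [hI]
  rw [integral_const_mul]
  unfold mellinInv at key
  simp only [Complex.ofReal_one, Complex.one_cpow, one_smul] at key
  rw [Complex.real_smul] at key
  unfold auxF at key ⊢
  push_cast at key ⊢
  rw [mul_one] at key
  linear_combination (Real.pi : ℂ) ^ 2 * key
end

section
/- Let y ∈ ℂ with Re(y) > 0. Then lim_{a→0} [ ζ'(1−a)/y − (1/2) ζ'(−a) − (1/2) (2π/y)^{1+a} csc(πa/2) ζ'(−a) + (1/2) ζ(−a) (2π/y)^{1+a} csc(πa/2) ( log(2π/y) − (π/2) cot(πa/2) ) ] = (1/4) log(2π) − log²(y)/(2y) + γ²/(2y) − π²/(12y), where the limit is taken as a → 0 through complex values a ≠ 0 in a punctured neighborhood of 0. -/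
open Filter Topology MeasureTheory

lemma taylor2_aux (f : ℂ → ℂ) (hf : AnalyticAt ℂ f 0) :
    ∃ h : ℂ → ℂ, AnalyticAt ℂ h 0 ∧ h 0 = deriv (deriv f) 0 / 2 ∧
      ∀ a, f a = f 0 + deriv f 0 * a + a ^ 2 * h a := by
  have key : ∀ g : ℂ → ℂ, AnalyticAt ℂ g 0 → AnalyticAt ℂ (dslope g 0) 0 := by
    intro g hg
    obtain ⟨p, hp⟩ := hg
    exact ⟨_, hp.has_fpower_series_dslope_fslope⟩
  have h1 := key f hf
  have h2 := key _ h1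
  have hexp : ∀ a, f a = f 0 + deriv f 0 * a + a ^ 2 * dslope (dslope f 0) 0 a := by
    intro a
    have e1 := sub_smul_dslope f 0 a
    have e2 := sub_smul_dslope (dslope f 0) 0 a
    rw [dslope_same] at e2
    simp only [sub_zero, smul_eq_mul] at e1 e2
    linear_combination (-1 : ℂ) * e1 - a * e2
  refine ⟨dslope (dslope f 0) 0, h2, ?_, hexp⟩
  generalize dslope (dslope f 0) 0 = h at h2 hexp
  have hd : deriv f =ᶠ[𝓝 0] fun a => deriv f 0 + (2 * a * h a + a ^ 2 * deriv h a) := by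
    filter_upwards [h2.eventually_analyticAt] with a ha
    have : HasDerivAt (fun a => f 0 + deriv f 0 * a + a ^ 2 * h a)
        (deriv f 0 + (2 * a * h a + a ^ 2 * deriv h a)) a := by
      have hA := ((hasDerivAt_id a).const_mul (deriv f 0)).const_add (f 0)
      have hB := ((hasDerivAt_id a).pow 2).mul ha.differentiableAt.hasDerivAt
      refine (hA.add hB).congr_deriv ?_
      simp
    rw [← this.deriv]
    congr 1
    funext z
    exact hexp z
  have h3 : HasDerivAt (fun a => deriv f 0 + (2 * a * h a + a ^ 2 * deriv h a)) (2 * h 0) 0 := by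
    have hA := ((hasDerivAt_id (0 : ℂ)).const_mul 2).mul h2.differentiableAt.hasDerivAt
    have hB := ((hasDerivAt_id (0 : ℂ)).pow 2).mul h2.deriv.differentiableAt.hasDerivAt
    refine ((hA.add hB).const_add (deriv f 0)).congr_deriv ?_
    simp
  rw [hd.deriv_eq, h3.deriv]
  ring

lemma sin_cube_aux : Tendsto (fun x : ℂ => (Complex.sin x - x) / x ^ 3) (𝓝[≠] 0) (𝓝 (-1 / 6)) := by
  rw [tendsto_iff_norm_sub_tendsto_zero]
  have hl : Tendsto (fun x : ℂ => ‖x‖ ^ 2 / 100) (𝓝[≠] 0) (𝓝 0) := by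
    have : Continuous (fun x : ℂ => ‖x‖ ^ 2 / 100) := by fun_prop
    have h := (this.tendsto 0).mono_left (nhdsWithin_le_nhds (s := {(0 : ℂ)}ᶜ))
    simpa using h
  refine squeeze_zero' (Eventually.of_forall fun _ => norm_nonneg _) ?_ hl
  have hb : ∀ᶠ x : ℂ in 𝓝[≠] 0, ‖x‖ ≤ 1 := by
    apply nhdsWithin_le_nhds
    filter_upwards [Metric.closedBall_mem_nhds (0 : ℂ) one_pos] with x hx
    simpa using hx
  filter_upwards [hb, self_mem_nhdsWithin] with x hx hx0
  have hx0 : x ≠ 0 := hx0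
  have e : (Complex.sin x - x) / x ^ 3 - -1 / 6 = (Complex.sin x - (x - x ^ 3 / 6)) / x ^ 3 := by
    field_simp
    ring
  rw [e, norm_div, norm_pow, div_le_iff₀ (by positivity)]
  refine (Complex.sin_bound hx).trans (le_of_eq ?_)
  ring

lemma csc_aux : Tendsto (fun x : ℂ => (x / Complex.sin x - 1) / x ^ 2) (𝓝[≠] 0) (𝓝 (1 / 6)) := by
  have hs : Tendsto (fun x : ℂ => 1 + x ^ 2 * ((Complex.sin x - x) / x ^ 3)) (𝓝[≠] 0)
      (𝓝 (1 + 0 ^ 2 * (-1 / 6))) := by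
    have hid : Tendsto (fun x : ℂ => x) (𝓝[≠] 0) (𝓝 0) := tendsto_id.mono_left nhdsWithin_le_nhds
    exact ((hid.pow 2).mul sin_cube_aux).const_add 1
  have hq := (sin_cube_aux.neg).div hs (by norm_num)
  have hv : -(-1 / 6 : ℂ) / (1 + 0 ^ 2 * (-1 / 6)) = 1 / 6 := by norm_num
  rw [hv] at hq
  have hne : ∀ᶠ x : ℂ in 𝓝[≠] 0, 1 + x ^ 2 * ((Complex.sin x - x) / x ^ 3) ≠ 0 :=
    hs.eventually_ne (by norm_num)
  refine hq.congr' ?_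
  filter_upwards [hne, self_mem_nhdsWithin] with x hx hx0
  have hx0 : x ≠ 0 := hx0
  have hsin : 1 + x ^ 2 * ((Complex.sin x - x) / x ^ 3) = Complex.sin x / x := by
    field_simp
    ring
  simp only [Pi.div_apply]
  rw [hsin] at hx ⊢
  have hs0 : Complex.sin x ≠ 0 := fun h => hx (by simp [h])
  field_simp
  ring

lemma csc_pi_aux : Tendsto (fun a : ℂ => ((Real.pi : ℂ) * a / Complex.sin (Real.pi * a) - 1) / a ^ 2)
    (𝓝[≠] 0) (𝓝 ((Real.pi : ℂ) ^ 2 / 6)) := by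
  have hpi : (Real.pi : ℂ) ≠ 0 := by exact_mod_cast Real.pi_ne_zero
  have hm : Tendsto (fun a : ℂ => (Real.pi : ℂ) * a) (𝓝[≠] 0) (𝓝[≠] 0) := by
    apply tendsto_nhdsWithin_of_tendsto_nhds_of_eventually_within
    · have : Continuous (fun a : ℂ => (Real.pi : ℂ) * a) := by fun_prop
      have h := (this.tendsto 0).mono_left (nhdsWithin_le_nhds (s := {(0 : ℂ)}ᶜ))
      simpa using h
    · filter_upwards [self_mem_nhdsWithin] with a ha
      exact mul_ne_zero hpi ha
  have h := (csc_aux.comp hm).const_mul ((Real.pi : ℂ) ^ 2)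
  have hv : (Real.pi : ℂ) ^ 2 * (1 / 6) = (Real.pi : ℂ) ^ 2 / 6 := by ring
  rw [hv] at h
  refine h.congr' ?_
  filter_upwards [self_mem_nhdsWithin] with a ha
  have ha : a ≠ 0 := ha
  simp only [Function.comp]
  rw [mul_pow, mul_div_assoc', mul_div_mul_left _ _ (pow_ne_zero 2 hpi)]

lemma gamma_analytic_aux : AnalyticAt ℂ (fun a : ℂ => Complex.Gamma (1 + a)) 0 := by
  rw [Complex.analyticAt_iff_eventually_differentiableAt]
  have : ∀ᶠ a : ℂ in 𝓝 0, 0 < (1 + a).re := by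
    have hc : Continuous (fun a : ℂ => (1 + a).re) := by fun_prop
    exact hc.continuousAt.eventually (lt_mem_nhds (by simp))
  filter_upwards [this] with a ha
  have hd : DifferentiableAt ℂ Complex.Gamma (1 + a) := by
    apply Complex.differentiableAt_Gamma
    intro m hm
    rw [hm] at ha
    simp at ha
    have : (0 : ℝ) ≤ m := by positivity
    linarith
  exact hd.comp a (by fun_prop)

lemma gamma_expand_aux : ∃ h : ℂ → ℂ, AnalyticAt ℂ h 0 ∧
    h 0 = (Real.eulerMascheroniConstant : ℂ) ^ 2 / 2 + (Real.pi : ℂ) ^ 2 / 12 ∧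
    ∀ a, Complex.Gamma (1 + a) = 1 - Real.eulerMascheroniConstant * a + a ^ 2 * h a := by
  obtain ⟨h, hh, -, hexp⟩ := taylor2_aux _ gamma_analytic_aux
  have hd : deriv (fun a : ℂ => Complex.Gamma (1 + a)) 0 = -Real.eulerMascheroniConstant := by
    rw [deriv_comp_const_add]
    simpa using Complex.hasDerivAt_Gamma_one.deriv
  simp only [hd, add_zero, Complex.Gamma_one] at hexp
  refine ⟨h, hh, ?_, fun a => by rw [hexp]; ring⟩
  set g : ℂ := ((Real.eulerMascheroniConstant : ℝ) : ℂ) with hg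
  have hid : Tendsto (fun x : ℂ => x) (𝓝[≠] 0) (𝓝 0) := tendsto_id.mono_left nhdsWithin_le_nhds
  have h1 : Tendsto h (𝓝[≠] 0) (𝓝 (h 0)) := hh.continuousAt.tendsto.mono_left nhdsWithin_le_nhds
  have h2 : Tendsto (fun a => h (-a)) (𝓝[≠] 0) (𝓝 (h 0)) := by
    have : ContinuousAt (fun a => h (-a)) 0 := by
      apply ContinuousAt.comp (g := h) (f := fun a : ℂ => -a)
      · simpa using hh.continuousAt
      · fun_prop
    have h := this.tendsto.mono_left (nhdsWithin_le_nhds (s := {(0 : ℂ)}ᶜ))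
    simpa using h
  have hL : Tendsto (fun a => h a + h (-a) - g ^ 2 + a * (g * h a - g * h (-a))
      + a ^ 2 * (h a * h (-a))) (𝓝[≠] 0)
      (𝓝 (h 0 + h 0 - g ^ 2 + 0 * (g * h 0 - g * h 0) + 0 ^ 2 * (h 0 * h 0))) := by
    exact (((h1.add h2).sub_const _).add (hid.mul ((h1.const_mul g).sub (h2.const_mul g)))).add
      ((hid.pow 2).mul (h1.mul h2))
  have hR := csc_pi_aux
  have heq := tendsto_nhds_unique (hL.congr' ?_) hR
  · linear_combination heq / 2
  · filter_upwards [self_mem_nhdsWithin] with a ha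
    have ha : a ≠ 0 := ha
    have hG := Complex.Gamma_mul_Gamma_one_sub a
    have hA : Complex.Gamma (1 + a) = a * Complex.Gamma a := by
      rw [add_comm, Complex.Gamma_add_one a ha]
    have e1 := hexp a
    have e2 := hexp (-a)
    rw [← sub_eq_add_neg] at e2
    have e3 : (Real.pi : ℂ) * a / Complex.sin (Real.pi * a)
        = Complex.Gamma (1 + a) * Complex.Gamma (1 - a) := by
      rw [hA, mul_assoc, hG]
      ring
    rw [e3, e1, e2]
    field_simp
    ring

lemma exp_expand_aux (L : ℂ) : ∃ e : ℂ → ℂ, AnalyticAt ℂ e 0 ∧ e 0 = L ^ 2 / 2 ∧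
    ∀ a, Complex.exp (-L * a) = 1 - L * a + a ^ 2 * e a := by
  have hd : ∀ c : ℂ, deriv (fun a : ℂ => c * Complex.exp (-L * a))
      = fun a => (-L * c) * Complex.exp (-L * a) := by
    intro c
    funext a
    have h := (((hasDerivAt_id a).const_mul (-L)).cexp).const_mul c
    refine HasDerivAt.deriv ?_
    refine h.congr_deriv ?_
    simp
    ring
  have h1 := hd 1
  simp only [one_mul, mul_one] at h1
  obtain ⟨e, he, he0, hexp⟩ := taylor2_aux (fun a : ℂ => Complex.exp (-L * a)) (by fun_prop)
  refine ⟨e, he, ?_, fun a => ?_⟩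
  · rw [he0, h1, hd]
    simp
    ring
  · rw [hexp a, h1]
    simp
    ring

lemma sin_ne_aux {a : ℂ} (ha : a ≠ 0) (h1 : ‖a‖ < 1) : Complex.sin ((Real.pi : ℂ) * a / 2) ≠ 0 := by
  have hpi : (Real.pi : ℂ) ≠ 0 := by exact_mod_cast Real.pi_ne_zero
  intro h
  rw [Complex.sin_eq_zero_iff] at h
  obtain ⟨k, hk⟩ := h
  have e : a = 2 * k := by
    have : (Real.pi : ℂ) * a = Real.pi * (2 * k) := by linear_combination 2 * hk
    exact mul_left_cancel₀ hpi this
  have hk0 : k ≠ 0 := by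
    rintro rfl
    exact ha (by simpa using e)
  rw [e, norm_mul] at h1
  have h2 : (1 : ℝ) ≤ |(k : ℝ)| := by exact_mod_cast Int.one_le_abs hk0
  simp at h1
  linarith

lemma log_div_aux (y : ℂ) (hy : 0 < y.re) :
    Complex.log (2 * (Real.pi : ℂ) / y) = Complex.log (2 * (Real.pi : ℂ)) - Complex.log y := by
  have hy0 : y ≠ 0 := by
    rintro rfl
    simp at hy
  have harg : y.arg ≠ Real.pi := by
    have := Complex.abs_arg_lt_pi_div_two_iff.2 (Or.inl hy)
    intro h
    rw [h, abs_of_pos Real.pi_pos] at this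
    linarith [Real.pi_pos]
  have e : (2 * (Real.pi : ℂ)) = ((2 * Real.pi : ℝ) : ℂ) := by push_cast; ring
  have hp : 0 < 2 * Real.pi := by positivity
  rw [div_eq_mul_inv, e, Complex.log_ofReal_mul hp (inv_ne_zero hy0), Complex.log_inv _ harg,
    Complex.ofReal_log hp.le]
  ring

lemma F_aux (y : ℂ) (hy : 0 < y.re) {a : ℂ} (ha : a ≠ 0) (h1 : ‖a‖ < 1) :
    (1/2) * riemannZeta (-a) * (2 * (Real.pi : ℂ) / y) ^ ((1 : ℂ) + a)
      * (1 / Complex.sin ((Real.pi : ℂ) * a / 2)) =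
    -(y⁻¹ * Complex.exp (-Complex.log y * a) * Complex.Gamma (1 + a)) * riemannZeta (1 + a) := by
  have hpi : (Real.pi : ℂ) ≠ 0 := by exact_mod_cast Real.pi_ne_zero
  have hy0 : y ≠ 0 := by
    rintro rfl
    simp at hy
  have hs := sin_ne_aux ha h1
  have hfe := riemannZeta_one_sub (s := 1 + a) (by
    intro n hn
    have hr : 1 + a.re = -(n : ℝ) := by simpa using congrArg Complex.re hn
    have h2 := (abs_le.1 (Complex.abs_re_le_norm a)).1
    have : (0 : ℝ) ≤ n := by positivity
    linarith) (by simpa using ha)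
  have e1 : (1 : ℂ) - (1 + a) = -a := by ring
  have e2 : Complex.cos (Real.pi * (1 + a) / 2) = -Complex.sin (Real.pi * a / 2) := by
    rw [← Complex.cos_add_pi_div_two]
    congr 1
    ring
  have hq : 2 * (Real.pi : ℂ) ≠ 0 := mul_ne_zero two_ne_zero hpi
  have e3 : (2 * (Real.pi : ℂ)) ^ (-(1 + a)) * (2 * (Real.pi : ℂ) / y) ^ ((1 : ℂ) + a)
      = y⁻¹ * Complex.exp (-Complex.log y * a) := by
    rw [Complex.cpow_def_of_ne_zero hq, Complex.cpow_def_of_ne_zero (div_ne_zero hq hy0),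
      log_div_aux y hy, ← Complex.exp_add]
    conv_rhs => rw [← Complex.exp_log hy0, ← Complex.exp_neg, ← Complex.exp_add, Complex.exp_log hy0]
    congr 1
    ring
  rw [e1, e2] at hfe
  rw [hfe, ← e3]
  field_simp

theorem stmt16 (y : ℂ) (hy : 0 < y.re) :
    Filter.Tendsto (fun a : ℂ =>
        deriv riemannZeta (1 - a) / y - (1/2) * deriv riemannZeta (-a)
          - (1/2) * (2 * (Real.pi : ℂ) / y) ^ ((1 : ℂ) + a)
              * (1 / Complex.sin ((Real.pi : ℂ) * a / 2)) * deriv riemannZeta (-a)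
          + (1/2) * riemannZeta (-a) * (2 * (Real.pi : ℂ) / y) ^ ((1 : ℂ) + a)
              * (1 / Complex.sin ((Real.pi : ℂ) * a / 2))
              * (Complex.log (2 * (Real.pi : ℂ) / y)
                - ((Real.pi : ℂ) / 2)
                  * (Complex.cos ((Real.pi : ℂ) * a / 2) / Complex.sin ((Real.pi : ℂ) * a / 2))))
      (nhdsWithin 0 {(0 : ℂ)}ᶜ)
      (nhds ((1/4) * Complex.log (2 * (Real.pi : ℂ)) - (Complex.log y) ^ 2 / (2 * y)
        + (eulerGamma : ℂ) ^ 2 / (2 * y) - (Real.pi : ℂ) ^ 2 / (12 * y))) := by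
  have hpi : (Real.pi : ℂ) ≠ 0 := by exact_mod_cast Real.pi_ne_zero
  have hq : 2 * (Real.pi : ℂ) ≠ 0 := mul_ne_zero two_ne_zero hpi
  have hy0 : y ≠ 0 := by
    rintro rfl
    simp at hy
  obtain ⟨h, hh, hh0, hhexp⟩ := gamma_expand_aux
  obtain ⟨e, he, he0, heexp⟩ := exp_expand_aux (Complex.log y)
  unfold eulerGamma
  set g : ℂ := ((Real.eulerMascheroniConstant : ℝ) : ℂ) with hg
  set L := Complex.log y with hL
  -- second-order remainder of `G`
  let k : ℂ → ℂ := fun a => y⁻¹ * (L * g + e a + h a - a * (g * e a + L * h a) + a ^ 2 * (e a * h a))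
  have hk : AnalyticAt ℂ k 0 := by
    have hid : AnalyticAt ℂ (fun a : ℂ => a) 0 := analyticAt_id
    have hg' : AnalyticAt ℂ (fun _ : ℂ => g) 0 := analyticAt_const
    have hL' : AnalyticAt ℂ (fun _ : ℂ => L) 0 := analyticAt_const
    exact analyticAt_const.mul (((((hL'.mul hg').add he).add hh).sub
      (hid.mul ((hg'.mul he).add (hL'.mul hh)))).add ((hid.pow 2).mul (he.mul hh)))
  have hk0 : k 0 = y⁻¹ * (L * g + L ^ 2 / 2 + (g ^ 2 / 2 + (Real.pi : ℂ) ^ 2 / 12)) := by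
    simp [k, he0, hh0]
  let G : ℂ → ℂ := fun a => y⁻¹ - y⁻¹ * (L + g) * a + a ^ 2 * k a
  have hG : ∀ a, y⁻¹ * Complex.exp (-L * a) * Complex.Gamma (1 + a) = G a := by
    intro a
    rw [heexp, hhexp]
    simp only [G, k]
    ring
  have hGan : AnalyticAt ℂ G 0 := by
    have hid : AnalyticAt ℂ (fun a : ℂ => a) 0 := analyticAt_id
    exact (analyticAt_const.sub (analyticAt_const.mul hid)).add ((hid.pow 2).mul hk)
  have hGd : deriv G 0 = - (y⁻¹ * (L + g)) := by
    have hA := ((hasDerivAt_id (0 : ℂ)).const_mul (y⁻¹ * (L + g))).const_sub y⁻¹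
    have hB := ((hasDerivAt_id (0 : ℂ)).pow 2).mul hk.differentiableAt.hasDerivAt
    refine ((hA.add hB).congr_deriv ?_).deriv
    simp
  have hZ := differentiable_riemannZeta₀
  -- the limit of the regular part
  have hlim : Tendsto (fun a : ℂ => deriv riemannZeta₀ (1 - a) / y - (1 / 2) * deriv riemannZeta (-a)
      + (-(k a + a * deriv k a)
        - (deriv G a * riemannZeta₀ (1 + a) + G a * deriv riemannZeta₀ (1 + a)))) (𝓝 0)
      (𝓝 (deriv riemannZeta₀ 1 / y - (1 / 2) * deriv riemannZeta 0
      + (-(k 0 + 0 * deriv k 0)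
        - (deriv G 0 * riemannZeta₀ 1 + G 0 * deriv riemannZeta₀ 1)))) := by
    have t1 : Tendsto (fun a : ℂ => (1 : ℂ) - a) (𝓝 0) (𝓝 1) := by
      have : Continuous (fun a : ℂ => (1 : ℂ) - a) := by fun_prop
      simpa using this.tendsto 0
    have t2 : Tendsto (fun a : ℂ => (1 : ℂ) + a) (𝓝 0) (𝓝 1) := by
      have : Continuous (fun a : ℂ => (1 : ℂ) + a) := by fun_prop
      simpa using this.tendsto 0
    have t3 : Tendsto (fun a : ℂ => -a) (𝓝 0) (𝓝 0) := by
      have : Continuous (fun a : ℂ => -a) := by fun_prop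
      simpa using this.tendsto 0
    have hZ' : Continuous (deriv riemannZeta₀) := hZ.deriv.continuous
    have hz0 : AnalyticAt ℂ riemannZeta 0 := by
      rw [Complex.analyticAt_iff_eventually_differentiableAt]
      filter_upwards [compl_singleton_mem_nhds (zero_ne_one : (0 : ℂ) ≠ 1)] with s hs
      exact differentiableAt_riemannZeta hs
    have a1 := (hZ'.tendsto 1).comp t1
    have a2 := (hZ'.tendsto 1).comp t2
    have a3 := (hZ.continuous.tendsto 1).comp t2
    have a4 := (hz0.deriv.continuousAt.tendsto).comp t3
    have a5 := hk.continuousAt.tendsto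
    have a6 := hk.deriv.continuousAt.tendsto
    have a7 := hGan.continuousAt.tendsto
    have a8 := hGan.deriv.continuousAt.tendsto
    have hid : Tendsto (fun a : ℂ => a) (𝓝 0) (𝓝 0) := tendsto_id
    exact ((a1.div_const y).sub (a4.const_mul (1 / 2))).add
      (((a5.add (hid.mul a6)).neg).sub ((a8.mul a3).add (a7.mul a2)))
  have hval : deriv riemannZeta₀ 1 / y - (1 / 2) * deriv riemannZeta 0
      + (-(k 0 + 0 * deriv k 0)
        - (deriv G 0 * riemannZeta₀ 1 + G 0 * deriv riemannZeta₀ 1))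
      = (1/4) * Complex.log (2 * (Real.pi : ℂ)) - L ^ 2 / (2 * y)
        + g ^ 2 / (2 * y) - (Real.pi : ℂ) ^ 2 / (12 * y) := by
    have hG0 : G 0 = y⁻¹ := by simp [G]
    rw [hk0, hGd, hG0, riemannZeta₀_one, deriv_riemannZeta_zero, ← hg]
    field_simp
    ring
  rw [hval] at hlim
  refine (hlim.mono_left nhdsWithin_le_nhds).congr' ?_
  have hball : ∀ᶠ a : ℂ in 𝓝[≠] 0, ‖a‖ < 1 := by
    apply nhdsWithin_le_nhds
    filter_upwards [Metric.ball_mem_nhds (0 : ℂ) one_pos] with x hx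
    simpa using hx
  filter_upwards [hball, self_mem_nhdsWithin,
    nhdsWithin_le_nhds hk.eventually_analyticAt, nhdsWithin_le_nhds hGan.eventually_analyticAt]
    with a ha1 ha hka hGa
  have ha : a ≠ 0 := ha
  have hsin := sin_ne_aux ha ha1
  have hne1 : -a ≠ 1 := by
    intro hc
    have : ‖a‖ = 1 := by rw [← norm_neg, hc, norm_one]
    linarith
  -- derivative computed from the definition
  have d1 : HasDerivAt (fun a : ℂ => (1/2) * riemannZeta (-a) * (2 * (Real.pi : ℂ) / y) ^ ((1 : ℂ) + a)
      * (1 / Complex.sin ((Real.pi : ℂ) * a / 2)))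
      (- (1/2) * (2 * (Real.pi : ℂ) / y) ^ ((1 : ℂ) + a)
              * (1 / Complex.sin ((Real.pi : ℂ) * a / 2)) * deriv riemannZeta (-a)
          + (1/2) * riemannZeta (-a) * (2 * (Real.pi : ℂ) / y) ^ ((1 : ℂ) + a)
              * (1 / Complex.sin ((Real.pi : ℂ) * a / 2))
              * (Complex.log (2 * (Real.pi : ℂ) / y)
                - ((Real.pi : ℂ) / 2)
                  * (Complex.cos ((Real.pi : ℂ) * a / 2) / Complex.sin ((Real.pi : ℂ) * a / 2)))) a := by
    have b1 : HasDerivAt (fun a : ℂ => riemannZeta (-a)) (deriv riemannZeta (-a) * (-1)) a :=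
      (differentiableAt_riemannZeta hne1).hasDerivAt.comp a (hasDerivAt_neg a)
    have b2 : HasDerivAt (fun a : ℂ => (2 * (Real.pi : ℂ) / y) ^ ((1 : ℂ) + a))
        ((2 * (Real.pi : ℂ) / y) ^ ((1 : ℂ) + a) * Complex.log (2 * (Real.pi : ℂ) / y) * 1) a :=
      ((hasDerivAt_id a).const_add 1).const_cpow (Or.inl (div_ne_zero hq hy0))
    have b3 : HasDerivAt (fun a : ℂ => Complex.sin ((Real.pi : ℂ) * a / 2))
        (Complex.cos ((Real.pi : ℂ) * a / 2) * ((Real.pi : ℂ) * 1 / 2)) a :=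
      (((hasDerivAt_id a).const_mul (Real.pi : ℂ)).div_const 2).csin
    have b4 := (((b1.const_mul (1 / 2)).mul b2).mul (b3.inv hsin))
    have b5 := b4.congr_of_eventuallyEq (f₁ := fun a : ℂ => (1/2) * riemannZeta (-a) *
      (2 * (Real.pi : ℂ) / y) ^ ((1 : ℂ) + a) * (1 / Complex.sin ((Real.pi : ℂ) * a / 2)))
      (Eventually.of_forall fun z => by simp)
    refine b5.congr_deriv ?_
    simp only [Pi.mul_apply, Pi.inv_apply]
    generalize Complex.sin ((Real.pi : ℂ) * a / 2) = S at hsin ⊢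
    generalize (2 * (Real.pi : ℂ) / y) ^ ((1 : ℂ) + a) = P
    field_simp
    ring
  -- derivative computed from the functional equation
  have d2 : HasDerivAt (fun a : ℂ => -(y⁻¹ * a⁻¹ - y⁻¹ * (L + g) + a * k a) - G a * riemannZeta₀ (1 + a))
      (y⁻¹ * (a ^ 2)⁻¹ + (-(k a + a * deriv k a)
        - (deriv G a * riemannZeta₀ (1 + a) + G a * deriv riemannZeta₀ (1 + a)))) a := by
    have c1 := (((hasDerivAt_inv ha).const_mul y⁻¹).sub_const (y⁻¹ * (L + g))).add
      ((hasDerivAt_id a).mul hka.differentiableAt.hasDerivAt)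
    have c2 : HasDerivAt (fun a : ℂ => riemannZeta₀ (1 + a)) (deriv riemannZeta₀ (1 + a) * 1) a :=
      (hZ (1 + a)).hasDerivAt.comp a ((hasDerivAt_id a).const_add 1)
    refine (c1.neg.sub (hGa.differentiableAt.hasDerivAt.mul c2)).congr_deriv ?_
    simp
    ring
  have hev : (fun a : ℂ => -(y⁻¹ * a⁻¹ - y⁻¹ * (L + g) + a * k a) - G a * riemannZeta₀ (1 + a))
      =ᶠ[𝓝 a] (fun a : ℂ => (1/2) * riemannZeta (-a) * (2 * (Real.pi : ℂ) / y) ^ ((1 : ℂ) + a)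
      * (1 / Complex.sin ((Real.pi : ℂ) * a / 2))) := by
    have hb : ∀ᶠ z : ℂ in 𝓝 a, ‖z‖ < 1 := continuous_norm.continuousAt.eventually (gt_mem_nhds ha1)
    filter_upwards [compl_singleton_mem_nhds ha, hb] with z hz hz1
    have hz : z ≠ 0 := hz
    rw [F_aux y hy hz hz1, ← hL, hG, riemannZeta_eq_inv_sub_add (by simpa using hz)]
    simp only [G, add_sub_cancel_left]
    field_simp
    ring
  have huniq := d2.unique (d1.congr_of_eventuallyEq hev)
  have hzd : deriv riemannZeta (1 - a) = -((a ^ 2)⁻¹) + deriv riemannZeta₀ (1 - a) := by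
    rw [deriv_riemannZeta_eq_neg_inv_sub_sq_add (by simpa using ha)]
    rw [show (1 : ℂ) - a - 1 = -a by ring, inv_neg, neg_sq, inv_pow]
  rw [hzd]
  linear_combination huniq
end

section
/- Let z ∈ ℂ ∖ (−∞,0]. Then lim_{n→∞} ( Σ_{j=0}^{n} log(j+z)/(j+z) − (1/2) log²(n+z) ) = −ψ₁(z). That is, ψ₁(z) = −γ₁(z), where γ₁(z) is the coefficient arising in the Laurent expansion of the Hurwitz zeta function ζ(s,z) = 1/(s−1) + Σ_{k=0}^∞ ((−1)^k γ_k(z)/k!) (s−1)^k at s = 1. -/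
open Filter Topology MeasureTheory

noncomputable def psi1 (z : ℂ) : ℂ :=
  -(gamma1 : ℂ) - Complex.log z / z -
    ∑' n : ℕ, (Complex.log (((n : ℂ) + 1) + z) / (((n : ℂ) + 1) + z)
      - Complex.log ((n : ℂ) + 1) / ((n : ℂ) + 1))

lemma aux_summable : Summable (fun n : ℕ => 1 / (((n : ℝ) + 1) * √((n : ℝ) + 1))) := by
  have h := (Real.summable_one_div_nat_rpow (p := 3/2)).2 (by norm_num)
  have h2 := (summable_nat_add_iff 1).2 h
  refine h2.congr fun n => ?_
  have hp : (0 : ℝ) < (n : ℝ) + 1 := by positivity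
  push_cast
  rw [Real.sqrt_eq_rpow, show (3 / 2 : ℝ) = 1 + 1 / 2 by norm_num, Real.rpow_add hp, Real.rpow_one]

lemma aux_log (a : ℝ) (ha : 0 < a) : Real.log a ≤ 2 * √a := by
  have h := Real.log_le_sub_one_of_pos (Real.sqrt_pos.2 ha)
  rw [Real.log_sqrt ha.le] at h
  linarith

/-- the expression log a / a^2 against the summable majorant -/
lemma aux_div (a : ℝ) (ha : 1 ≤ a) : Real.log a / a ^ 2 ≤ 2 * (1 / (a * √a)) := by
  have h0 : 0 < a := by linarith
  have hs := Real.sqrt_pos.2 h0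
  have hss := Real.mul_self_sqrt h0.le
  have := aux_log a h0
  rw [mul_one_div, div_le_div_iff₀ (by positivity) (by positivity)]
  calc Real.log a * (a * √a) ≤ (2 * √a) * (a * √a) := by gcongr
    _ = 2 * a * (√a * √a) := by ring
    _ = 2 * a ^ 2 := by rw [hss]; ring

lemma aux_one (a : ℝ) (ha : 1 ≤ a) : 1 / a ^ 2 ≤ 1 / (a * √a) := by
  have h0 : 0 < a := by linarith
  have hs := Real.sqrt_pos.2 h0
  have : √a ≤ a := by
    rw [Real.sqrt_le_left h0.le]; nlinarith
  apply one_div_le_one_div_of_le (by positivity)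
  nlinarith

lemma gamma1_tendsto : Tendsto
    (fun n : ℕ => ∑ j ∈ Finset.Icc 1 n, Real.log j / j - (Real.log n) ^ 2 / 2)
    atTop (𝓝 gamma1) := by
  apply tendsto_nhds_limUnder
  set S : ℕ → ℝ := fun n : ℕ => ∑ j ∈ Finset.Icc 1 n, Real.log j / j - (Real.log n) ^ 2 / 2
    with hS
  have hd : Summable (fun n : ℕ => S (n + 1 + 1) - S (n + 1)) := by
    refine Summable.of_norm_bounded (g := fun n : ℕ => 9 * (1 / (((n : ℝ) + 1) * √((n : ℝ) + 1))))
      (aux_summable.mul_left 9) fun n => ?_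
    set a : ℝ := (n : ℝ) + 1 with ha
    have ha1 : 1 ≤ a := by rw [ha]; linarith [Nat.cast_nonneg (α := ℝ) n]
    have h0 : 0 < a := by linarith
    have hL1 : Real.log (a + 1) - Real.log a ≤ 1 / a := by
      rw [← Real.log_div (by positivity) (by positivity)]
      have := Real.log_le_sub_one_of_pos (x := (a + 1) / a) (by positivity)
      have e : (a + 1) / a - 1 = 1 / a := by field_simp; try ring
      linarith
    have hL2 : 1 / (a + 1) ≤ Real.log (a + 1) - Real.log a := by
      rw [← Real.log_div (by positivity) (by positivity)]
      have := Real.one_sub_inv_le_log_of_pos (x := (a + 1) / a) (by positivity)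
      have e : 1 - ((a + 1) / a)⁻¹ = 1 / (a + 1) := by field_simp; try ring
      linarith
    have hla := Real.log_nonneg ha1
    have hS1 : S (n + 1 + 1) - S (n + 1) = Real.log (a + 1) / (a + 1)
        - (Real.log (a + 1) ^ 2 - Real.log a ^ 2) / 2 := by
      simp only [hS]
      rw [Finset.sum_Icc_succ_top (by omega)]
      push_cast
      rw [← ha]
      ring
    rw [hS1]
    set l := Real.log a
    obtain ⟨L, hL⟩ : ∃ L, Real.log (a + 1) = l + L := ⟨Real.log (a + 1) - l, by ring⟩
    rw [hL] at hL1 hL2 ⊢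
    have hL0 : 0 ≤ L := by
      have : 0 ≤ 1 / (a + 1) := by positivity
      linarith
    have e : (l + L) / (a + 1) - ((l + L) ^ 2 - l ^ 2) / 2
      = (l + L) * (1 / (a + 1) - L) + L ^ 2 / 2 := by ring
    rw [e]
    have hi : 1 / a - 1 / (a + 1) ≤ 1 / a ^ 2 := by
      rw [div_sub_div _ _ (by positivity) (by positivity),
        div_le_div_iff₀ (by positivity) (by positivity)]
      nlinarith
    have hL3 : L ≤ 1 := by
      have : 1 / a ≤ 1 := by rw [div_le_one h0]; exact ha1
      linarith
    have hLL : L ^ 2 ≤ 1 / a ^ 2 := by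
      have := pow_le_pow_left₀ hL0 (by linarith : L ≤ 1 / a) 2
      simpa [div_pow] using this
    have hb1 := aux_div a ha1
    have hb2 := aux_one a ha1
    have hq : 0 ≤ 1 / a ^ 2 := by positivity
    have hx : |1 / (a + 1) - L| ≤ 1 / a ^ 2 := by
      rw [abs_le]; constructor <;> linarith
    rw [Real.norm_eq_abs]
    calc |(l + L) * (1 / (a + 1) - L) + L ^ 2 / 2|
        ≤ |(l + L) * (1 / (a + 1) - L)| + |L ^ 2 / 2| := abs_add_le _ _
      _ = (l + L) * |1 / (a + 1) - L| + L ^ 2 / 2 := by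
          rw [abs_mul, abs_of_nonneg (by linarith : 0 ≤ l + L),
            abs_of_nonneg (by positivity : 0 ≤ L ^ 2 / 2)]
      _ ≤ (l + 1) * (1 / a ^ 2) + 1 / a ^ 2 / 2 := by gcongr
      _ = l / a ^ 2 + 3 / 2 * (1 / a ^ 2) := by ring
      _ ≤ _ := by linarith
  have ht := hd.hasSum.tendsto_sum_nat
  refine ⟨_, (tendsto_add_atTop_iff_nat (f := S)
    (l := 𝓝 ((∑' n : ℕ, (S (n + 1 + 1) - S (n + 1))) + S 1)) 1).1 ?_⟩
  refine (ht.add_const (S 1)).congr fun n => ?_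
  rw [Finset.sum_range_sub (fun n => S (n + 1))]
  simp

/-- shift of the logarithm by a fixed complex number -/
lemma log_shift (z : ℂ) (a : ℝ) (h0 : 0 < a) (h : 2 * ‖z‖ < a) :
    ∃ L : ℂ, Complex.log ((a : ℂ) + z) = (Real.log a : ℂ) + L ∧ ‖L‖ ≤ 3 / 2 * (‖z‖ / a) := by
  have hac : (a : ℂ) ≠ 0 := by exact_mod_cast h0.ne'
  have hn : ‖z / a‖ = ‖z‖ / a := by
    rw [norm_div, Complex.norm_real, Real.norm_of_nonneg h0.le]
  have hle : ‖z / a‖ ≤ 1 / 2 := by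
    rw [hn, div_le_div_iff₀ h0 (by norm_num)]; linarith
  have hne : 1 + z / a ≠ 0 := by
    intro h1
    have : z / a = -1 := by linear_combination h1
    rw [this] at hle
    norm_num at hle
  refine ⟨Complex.log (1 + z / a), ?_, ?_⟩
  · rw [← Complex.log_ofReal_mul h0 hne]
    congr 1
    field_simp
  · rw [← hn]
    exact Complex.norm_log_one_add_half_le_self hle

lemma psi_summable (z : ℂ) :
    Summable (fun n : ℕ => Complex.log (((n : ℂ) + 1) + z) / (((n : ℂ) + 1) + z)
      - Complex.log ((n : ℂ) + 1) / ((n : ℂ) + 1)) := by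
  refine Summable.of_norm_bounded_eventually_nat
    (g := fun n : ℕ => (7 * ‖z‖) * (1 / (((n : ℝ) + 1) * √((n : ℝ) + 1))))
    (aux_summable.mul_left _) ?_
  obtain ⟨N, hN⟩ := exists_nat_gt (2 * ‖z‖)
  filter_upwards [eventually_ge_atTop N] with n hn
  have hn' : (N : ℝ) ≤ n := by exact_mod_cast hn
  have e1 : ((n : ℂ) + 1) = (((n : ℝ) + 1 : ℝ) : ℂ) := by push_cast; rfl
  rw [e1]
  set a : ℝ := (n : ℝ) + 1 with ha
  have ha1 : 1 ≤ a := by rw [ha]; linarith [Nat.cast_nonneg (α := ℝ) n]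
  have h0 : 0 < a := by linarith
  have h2 : 2 * ‖z‖ < a := by linarith
  obtain ⟨L, hL, hLn⟩ := log_shift z a h0 h2
  rw [hL, ← Complex.ofReal_log h0.le]
  have hac : (a : ℂ) ≠ 0 := by exact_mod_cast h0.ne'
  have hlow : a / 2 ≤ ‖(a : ℂ) + z‖ := by
    have := norm_sub_le ((a : ℂ) + z) z
    rw [add_sub_cancel_right, Complex.norm_real, Real.norm_of_nonneg h0.le] at this
    linarith
  have hne : (a : ℂ) + z ≠ 0 := by
    rw [← norm_pos_iff]; linarith
  have hla := Real.log_nonneg ha1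
  have e : ((Real.log a : ℂ) + L) / ((a : ℂ) + z) - (Real.log a : ℂ) / a
      = (L - (Real.log a : ℂ) * (z / a)) / ((a : ℂ) + z) := by
    field_simp
    ring
  rw [e, norm_div]
  have hnum : ‖L - (Real.log a : ℂ) * (z / a)‖ ≤ 3 / 2 * (‖z‖ / a) + Real.log a * (‖z‖ / a) := by
    refine (norm_sub_le _ _).trans (add_le_add hLn ?_)
    rw [norm_mul, norm_div, Complex.norm_real, Complex.norm_real, Real.norm_of_nonneg h0.le,
      Real.norm_of_nonneg hla]
  calc _ ≤ (3 / 2 * (‖z‖ / a) + Real.log a * (‖z‖ / a)) / (a / 2) := by gcongr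
    _ = ‖z‖ * (3 * (1 / a ^ 2) + 2 * (Real.log a / a ^ 2)) := by field_simp; try ring
    _ ≤ ‖z‖ * (3 * (1 / (a * √a)) + 2 * (2 * (1 / (a * √a)))) := by
        gcongr ‖z‖ * (3 * ?_ + 2 * ?_)
        · exact aux_one a ha1
        · exact aux_div a ha1
    _ = _ := by ring

lemma log_sq_tendsto (z : ℂ) :
    Tendsto (fun n : ℕ => Complex.log ((n : ℂ) + z) ^ 2 - ((Real.log n : ℝ) : ℂ) ^ 2)
      atTop (𝓝 0) := by
  have hlog : Tendsto (fun n : ℕ => Real.log n / n) atTop (𝓝 0) := by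
    have := Real.isLittleO_log_id_atTop.tendsto_div_nhds_zero
    exact this.comp tendsto_natCast_atTop_atTop
  have hinv : Tendsto (fun n : ℕ => 1 / (n : ℝ)) atTop (𝓝 0) :=
    tendsto_one_div_atTop_nhds_zero_nat
  have hg : Tendsto (fun n : ℕ => 3 * ‖z‖ * (Real.log n / n)
      + (3 / 2 * ‖z‖) ^ 2 * (1 / (n : ℝ)) ^ 2) atTop (𝓝 0) := by
    have := (hlog.const_mul (3 * ‖z‖)).add ((hinv.pow 2).const_mul ((3 / 2 * ‖z‖) ^ 2))
    simpa using this
  refine squeeze_zero_norm' ?_ hg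
  obtain ⟨N, hN⟩ := exists_nat_gt (2 * ‖z‖)
  filter_upwards [eventually_ge_atTop N, eventually_ge_atTop 1] with n hn hn1
  have hn' : (N : ℝ) ≤ n := by exact_mod_cast hn
  have ha1 : (1 : ℝ) ≤ n := by exact_mod_cast hn1
  obtain ⟨L, hL, hLn⟩ := log_shift z (n : ℝ) (by linarith) (by linarith)
  rw [Complex.ofReal_natCast] at hL
  rw [hL]
  have hla := Real.log_nonneg ha1
  have e : ((Real.log n : ℂ) + L) ^ 2 - (Real.log n : ℂ) ^ 2
    = 2 * (Real.log n : ℂ) * L + L ^ 2 := by ring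
  rw [e]
  refine (norm_add_le _ _).trans ?_
  rw [norm_mul, norm_mul, norm_pow, Complex.norm_real, Real.norm_of_nonneg hla, Complex.norm_ofNat]
  calc 2 * Real.log n * ‖L‖ + ‖L‖ ^ 2
      ≤ 2 * Real.log n * (3 / 2 * (‖z‖ / n)) + (3 / 2 * (‖z‖ / n)) ^ 2 := by gcongr
    _ = _ := by ring

theorem stmt18 (z : ℂ) (hz : z ∈ Complex.slitPlane) :
    Filter.Tendsto (fun n : ℕ =>
        (∑ j ∈ Finset.range (n + 1), Complex.log ((j : ℂ) + z) / ((j : ℂ) + z))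
          - (1/2) * (Complex.log ((n : ℂ) + z)) ^ 2)
      atTop (nhds (-psi1 z)) := by
  have h1 := (Complex.continuous_ofReal.tendsto _).comp gamma1_tendsto
  have h2 := (psi_summable z).hasSum.tendsto_sum_nat
  have h3 := (log_sq_tendsto z).const_mul (1 / 2)
  have h := ((h1.add h2).sub h3).add_const (Complex.log z / z)
  have e : -psi1 z = (gamma1 : ℂ) + (∑' n : ℕ,
      (Complex.log (((n : ℂ) + 1) + z) / (((n : ℂ) + 1) + z)
      - Complex.log ((n : ℂ) + 1) / ((n : ℂ) + 1))) - 1 / 2 * 0 + Complex.log z / z := by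
    unfold psi1; ring
  rw [e]
  refine h.congr fun n => ?_
  rw [Finset.sum_range_succ', Finset.sum_sub_distrib]
  have e2 : ((∑ j ∈ Finset.Icc 1 n, Real.log j / j : ℝ) : ℂ)
      = ∑ j ∈ Finset.range n, Complex.log ((j : ℂ) + 1) / ((j : ℂ) + 1) := by
    rw [Finset.range_eq_Ico, Finset.sum_Ico_add' (fun j : ℕ => Complex.log (j : ℂ) / (j : ℂ)) 0 n 1
      |> fun h => (by simpa using h : ∑ j ∈ Finset.Ico 0 n, Complex.log ((j : ℂ) + 1) / ((j : ℂ) + 1)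
        = ∑ j ∈ Finset.Ico 1 (n + 1), Complex.log (j : ℂ) / (j : ℂ))]
    push_cast
    refine Finset.sum_congr (by ext; simp) fun j _ => rfl
  simp only [Function.comp, Complex.ofReal_sub, e2]
  push_cast
  simp only [zero_add]
  ring
end

section
/- For every integer N ≥ 1 and every λ ∈ (0, π/2), there exist constants C > 0 and r > 0 such that for all y ∈ ℂ with 0 < |y| ≤ r and |arg(y)| ≤ λ, | Σ_{n=1}^∞ { log(2πn/y) − (1/2)( ψ(2πin/y) + ψ(−2πin/y) ) } + (1/2) Σ_{k=1}^{N} B_{2k}² y^{2k} / ( (2k) · (2k)! ) | ≤ C |y|^{2N+2}. -/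
open Filter Topology MeasureTheory

noncomputable def digamma (z : ℂ) : ℂ :=
  -(eulerGamma : ℂ) - 1 / z + ∑' n : ℕ, (1 / ((n : ℂ) + 1) - 1 / (((n : ℂ) + 1) + z))


lemma s19_lower (s : ℝ) (hs0 : 0 ≤ s) (hs : s < 1) (z : ℂ) (hz : -(s * ‖z‖) ≤ z.re) (t : ℝ) (ht : 0 ≤ t) :
    Real.sqrt ((1 - s) / 2) * (‖z‖ + t) ≤ ‖z + t‖ := by
  have h1 : ‖z + t‖ ^ 2 = ‖z‖ ^ 2 + 2 * t * z.re + t ^ 2 := by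
    rw [← Complex.normSq_eq_norm_sq, ← Complex.normSq_eq_norm_sq, Complex.normSq_apply,
      Complex.normSq_apply]
    simp
    ring
  apply le_of_sq_le_sq _ (norm_nonneg _)
  rw [mul_pow, Real.sq_sqrt (by linarith), h1]
  have h2 : 2 * t * (-(s * ‖z‖)) ≤ 2 * t * z.re := by gcongr
  nlinarith [mul_nonneg (by linarith : (0:ℝ) ≤ 1 - s) (sq_nonneg (‖z‖ - t)),
    mul_nonneg hs0 (sq_nonneg (‖z‖ - t))]

lemma s19_ne (z : ℂ) (hz : z.im ≠ 0) (t : ℝ) : z + t ≠ 0 := by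
  intro h
  apply hz
  have := congrArg Complex.im h
  simpa using this

lemma s19_slit (z : ℂ) (hz : z.im ≠ 0) : z ∈ Complex.slitPlane := Or.inr hz

noncomputable def s19J (p : ℕ) (z : ℂ) : ℂ :=
  ∫ x in (0:ℝ)..1, (bernoulliFun p x : ℂ) * ((z + x) ^ (p + 1))⁻¹

lemma s19_cont (p q : ℕ) (z : ℂ) (hz : z.im ≠ 0) :
    Continuous fun x : ℝ => (bernoulliFun p x : ℂ) * ((z + x) ^ q)⁻¹ := by
  have h : Continuous (bernoulliFun p) := by
    unfold bernoulliFun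
    exact Polynomial.continuous _
  apply Continuous.mul (Complex.continuous_ofReal.comp h)
  apply Continuous.inv₀ (by fun_prop)
  intro x
  exact pow_ne_zero _ (s19_ne z hz x)

lemma s19_J0 (z : ℂ) (hz : z.im ≠ 0) : s19J 0 z = Complex.log (z + 1) - Complex.log z := by
  unfold s19J
  have := intervalIntegral.integral_eq_sub_of_hasDerivAt (a := 0) (b := 1)
    (f := fun x : ℝ => Complex.log (z + x))
    (f' := fun x : ℝ => (bernoulliFun 0 x : ℂ) * ((z + x) ^ (0 + 1))⁻¹) ?_
    ((s19_cont 0 _ z hz).intervalIntegrable _ _)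
  · rw [this]; simp
  · intro x _
    have h1 : HasDerivAt (fun x : ℝ => z + (x : ℂ)) 1 x :=
      (Complex.ofRealCLM.hasDerivAt (x := x)).const_add z |>.congr_deriv (by simp)
    have := h1.clog_real (s19_slit (z + x) (by simpa using hz))
    simpa [bernoulliFun] using this

lemma s19_Jstep (p : ℕ) (z : ℂ) (hz : z.im ≠ 0) : s19J p z - s19J (p + 1) z =
    (bernoulliFun (p + 1) 1 : ℂ) / (p + 1) * ((z + 1) ^ (p + 1))⁻¹
    - (bernoulliFun (p + 1) 0 : ℂ) / (p + 1) * (z ^ (p + 1))⁻¹ := by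
  unfold s19J
  rw [← intervalIntegral.integral_sub ((s19_cont _ _ z hz).intervalIntegrable _ _)
    ((s19_cont _ _ z hz).intervalIntegrable _ _)]
  rw [intervalIntegral.integral_eq_sub_of_hasDerivAt (a := 0) (b := 1)
    (f := fun x : ℝ => (bernoulliFun (p + 1) x : ℂ) / (p + 1) * ((z + x) ^ (p + 1))⁻¹)]
  · simp
  · intro x _
    have h1 : HasDerivAt (fun x : ℝ => z + (x : ℂ)) 1 x :=
      (Complex.ofRealCLM.hasDerivAt (x := x)).const_add z |>.congr_deriv (by simp)
    have hne := s19_ne z hz x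
    have h2 := (h1.pow (p + 1)).inv (pow_ne_zero _ hne)
    have h3 := ((hasDerivAt_bernoulliFun (p + 1) x).ofReal_comp.div_const ((p : ℂ) + 1)).mul h2
    refine h3.congr_deriv ?_
    have hp : (p : ℂ) + 1 ≠ 0 := by exact_mod_cast Nat.succ_ne_zero p
    simp
    field_simp
    ring
  · exact ((s19_cont _ _ z hz).sub (s19_cont _ _ z hz)).intervalIntegrable _ _

noncomputable def s19Q (p : ℕ) (z : ℂ) : ℂ :=
  Complex.log z - ∑ j ∈ Finset.range p, (bernoulli (j + 1) : ℂ) / (j + 1) * (z ^ (j + 1))⁻¹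

lemma s19_Qstep (p : ℕ) (z : ℂ) (hz : z.im ≠ 0) :
    s19Q (p + 1) (z + 1) - s19Q (p + 1) z = 1 / (z + 1) + s19J (p + 1) z := by
  induction p with
  | zero =>
    have h0 := s19_J0 z hz
    have h1 := s19_Jstep 0 z hz
    simp [s19Q, bernoulliFun_eval_one, bernoulliFun_eval_zero, bernoulli_one] at h1 ⊢
    linear_combination (-1) * h0 + h1
  | succ p ih =>
    have h1 := s19_Jstep (p + 1) z hz
    rw [bernoulliFun_endpoints_eq_of_ne_one (by omega), bernoulliFun_eval_zero] at h1
    unfold s19Q at ih ⊢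
    rw [Finset.sum_range_succ, Finset.sum_range_succ _ (p + 1)]
    push_cast at h1 ih ⊢
    linear_combination ih + h1

lemma s19_Jbound (p : ℕ) (s : ℝ) (hs0 : 0 ≤ s) (hs : s < 1) : ∃ C > 0, ∀ z : ℂ, 
    -(s * ‖z‖) ≤ z.re → 1 ≤ ‖z‖ → ∀ m : ℕ, ‖s19J (p + 1) (z + m)‖ ≤ C / ‖z‖ ^ p / ((m : ℝ) + 1) ^ 2 := by
  have hc : Continuous (bernoulliFun (p + 1)) := by
    unfold bernoulliFun
    exact Polynomial.continuous _
  obtain ⟨B, hB⟩ := (isCompact_Icc (a := (0:ℝ)) (b := 1)).exists_bound_of_continuousOn hc.continuousOn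
  set c := Real.sqrt ((1 - s) / 2) with hcdef
  have hcpos : 0 < c := Real.sqrt_pos.2 (by linarith)
  refine ⟨(|B| + 1) / c ^ (p + 2), by positivity, fun z hz h1 m => ?_⟩
  unfold s19J
  have := intervalIntegral.norm_integral_le_of_norm_le_const (a := 0) (b := 1)
    (f := fun x : ℝ => (bernoulliFun (p + 1) x : ℂ) * ((z + m + x) ^ (p + 1 + 1))⁻¹)
    (C := (|B| + 1) / c ^ (p + 2) / ‖z‖ ^ p / ((m : ℝ) + 1) ^ 2) ?_
  · simpa using this
  · intro x hx
    rw [Set.uIoc_of_le zero_le_one] at hx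
    rw [norm_mul, Complex.norm_real, norm_inv, norm_pow]
    have hb := (hB x ⟨hx.1.le, hx.2⟩).trans ((le_abs_self B).trans (by linarith : |B| ≤ |B| + 1))
    have hl := s19_lower s hs0 hs z hz (m + x) (by have := hx.1; positivity)
    rw [← hcdef] at hl
    have e : z + ((m + x : ℝ) : ℂ) = z + m + x := by push_cast; ring
    rw [e] at hl
    have hx0 := hx.1
    have hlow : c ^ (p + 2) * (‖z‖ ^ p * ((m : ℝ) + 1) ^ 2) ≤ ‖z + m + x‖ ^ (p + 1 + 1) := by
      calc c ^ (p + 2) * (‖z‖ ^ p * ((m : ℝ) + 1) ^ 2)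
          ≤ c ^ (p + 2) * ((‖z‖ + (m + x)) ^ p * (‖z‖ + (m + x)) ^ 2) := by
            have hm : (0:ℝ) ≤ m := by positivity
            gcongr ?_ * (?_ ^ p * ?_ ^ 2)
            · linarith
            · linarith
        _ = (c * (‖z‖ + (m + x))) ^ (p + 2) := by rw [mul_pow, ← pow_add]
        _ ≤ _ := by gcongr
    calc ‖bernoulliFun (p + 1) x‖ * (‖z + m + x‖ ^ (p + 1 + 1))⁻¹ 
        ≤ (|B| + 1) * (c ^ (p + 2) * (‖z‖ ^ p * ((m : ℝ) + 1) ^ 2))⁻¹ := by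
          gcongr
      _ = _ := by field_simp

lemma s19_sumsq : Summable fun m : ℕ => 1 / ((m : ℝ) + 1) ^ 2 := by
  have := (summable_nat_add_iff 1).2 (Real.summable_one_div_nat_pow.2 (by norm_num : 1 < 2))
  simpa using this

lemma s19_C (s : ℝ) (hs0 : 0 ≤ s) (hs : s < 1) (z : ℂ) (hz : -(s * ‖z‖) ≤ z.re) (him : z.im ≠ 0) :
    Tendsto (fun M : ℕ => Complex.log M - ∑ m ∈ Finset.range M, 1 / (z + m + 1)) atTop
      (𝓝 (digamma z + 1 / z)) := by
  set c := Real.sqrt ((1 - s) / 2) with hcdef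
  have hcpos : 0 < c := Real.sqrt_pos.2 (by linarith)
  have hsum : Summable fun n : ℕ => (1 / ((n : ℂ) + 1) - 1 / (((n : ℂ) + 1) + z)) := by
    refine Summable.of_norm_bounded (s19_sumsq.mul_left (‖z‖ / c)) fun n => ?_
    have hl := s19_lower s hs0 hs z hz (n + 1) (by positivity)
    rw [← hcdef] at hl
    push_cast at hl
    have hn1 : (n : ℂ) + 1 ≠ 0 := by exact_mod_cast Nat.succ_ne_zero n
    have hn2 : (n : ℂ) + 1 + z ≠ 0 := by
      have := s19_ne z him (n + 1)
      push_cast at this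
      rwa [add_comm] at this
    have e : (1 / ((n : ℂ) + 1) - 1 / (((n : ℂ) + 1) + z)) = z / (((n : ℂ) + 1) * (z + (n + 1))) := by
      rw [add_comm z]
      field_simp
      ring
    have hn3 : ‖(n : ℂ) + 1‖ = (n : ℝ) + 1 := by
      have := Complex.norm_natCast (n + 1)
      push_cast at this
      exact this
    rw [e, norm_div, norm_mul, hn3]
    have hl2 : c * ((n : ℝ) + 1) ≤ ‖z + (n + 1)‖ := by
      refine le_trans ?_ hl
      exact mul_le_mul_of_nonneg_left (by linarith [norm_nonneg z]) hcpos.le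
    calc ‖z‖ / (((n : ℝ) + 1) * ‖z + (n + 1)‖) ≤ ‖z‖ / (((n : ℝ) + 1) * (c * ((n : ℝ) + 1))) := by
          gcongr
      _ = _ := by field_simp
  have h1 := hsum.hasSum.tendsto_sum_nat
  have h2 : Tendsto (fun n : ℕ => (((harmonic n : ℝ) - Real.log n : ℝ) : ℂ)) atTop
      (𝓝 (eulerGamma : ℂ)) :=
    (Complex.continuous_ofReal.tendsto _).comp Real.tendsto_harmonic_sub_log
  have h3 := h1.sub h2
  have e2 : digamma z + 1 / z = (∑' n : ℕ, (1 / ((n : ℂ) + 1) - 1 / (((n : ℂ) + 1) + z))) - (eulerGamma : ℂ) := by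
    unfold digamma; ring
  rw [e2]
  refine h3.congr fun M => ?_
  rw [Finset.sum_sub_distrib]
  have e3 : ∑ n ∈ Finset.range M, 1 / ((n : ℂ) + 1 + z) = ∑ m ∈ Finset.range M, 1 / (z + m + 1) :=
    Finset.sum_congr rfl fun n _ => by congr 1; ring
  rw [e3]
  have e4 : ((harmonic M : ℝ) : ℂ) = ∑ n ∈ Finset.range M, 1 / ((n : ℂ) + 1) := by
    simp [harmonic]
  push_cast at e4 ⊢
  rw [e4]
  ring

lemma s19_Qlim (p : ℕ) (z : ℂ) (him : z.im ≠ 0) :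
    Tendsto (fun M : ℕ => Complex.log M - s19Q p (z + M)) atTop (𝓝 0) := by
  have hinv : Tendsto (fun M : ℕ => (z + (M : ℂ))⁻¹) atTop (𝓝 0) := by
    apply tendsto_inv₀_cobounded.comp
    exact (tendsto_const_add_cobounded z).comp tendsto_natCast_atTop_cobounded
  have hl : Tendsto (fun M : ℕ => Complex.log M - Complex.log (z + M)) atTop (𝓝 0) := by
    have h1 : Tendsto (fun M : ℕ => 1 + z * (M : ℂ)⁻¹) atTop (𝓝 (1 + z * 0)) :=
      (tendsto_inv_atTop_nhds_zero_nat (𝕜 := ℂ)).const_mul z |>.const_add 1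
    have h2 : Tendsto (fun M : ℕ => - Complex.log (1 + z * (M : ℂ)⁻¹)) atTop (𝓝 0) := by
      have := (h1.clog (by simp)).neg
      simpa using this
    refine h2.congr' ?_
    filter_upwards [eventually_gt_atTop 0] with M hM
    have hM' : (M : ℂ) ≠ 0 := by exact_mod_cast hM.ne'
    have e : z + (M : ℂ) = ((M : ℝ) : ℂ) * (1 + z * (M : ℂ)⁻¹) := by
      push_cast; field_simp; ring
    have hne : (1 + z * (M : ℂ)⁻¹) ≠ 0 := by
      intro h
      rw [h, mul_zero] at e
      exact s19_ne z him M (by push_cast; exact e)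
    rw [e, Complex.log_ofReal_mul (by exact_mod_cast hM) hne, Complex.natCast_log]
    ring
  have hs : Tendsto (fun M : ℕ => ∑ j ∈ Finset.range p,
      (bernoulli (j + 1) : ℂ) / (j + 1) * ((z + M) ^ (j + 1))⁻¹) atTop (𝓝 0) := by
    have : Tendsto (fun M : ℕ => ∑ j ∈ Finset.range p,
      (bernoulli (j + 1) : ℂ) / (j + 1) * ((z + M) ^ (j + 1))⁻¹) atTop
      (𝓝 (∑ j ∈ Finset.range p, (bernoulli (j + 1) : ℂ) / (j + 1) * 0)) := by
      refine tendsto_finsetSum _ fun j _ => ?_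
      apply Tendsto.const_mul
      have := hinv.pow (j + 1)
      simpa using this
    simpa using this
  have := hl.add hs
  rw [add_zero] at this
  refine this.congr fun M => ?_
  unfold s19Q
  ring

lemma s19_D (p : ℕ) (s : ℝ) (hs0 : 0 ≤ s) (hs : s < 1) : ∃ C > 0, ∀ z : ℂ,
    -(s * ‖z‖) ≤ z.re → z.im ≠ 0 → 1 ≤ ‖z‖ →
      ‖digamma z + 1 / z - s19Q (p + 1) z‖ ≤ C / ‖z‖ ^ p := by
  obtain ⟨C, hC, h⟩ := s19_Jbound p s hs0 hs
  set S := ∑' m : ℕ, 1 / ((m : ℝ) + 1) ^ 2 with hS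
  have hS0 : 0 ≤ S := tsum_nonneg fun m => by positivity
  refine ⟨C * (S + 1), by positivity, fun z hz him h1 => ?_⟩
  have hA := (s19_C s hs0 hs z hz him).sub_const (s19Q (p + 1) z)
  have hB := (s19_Qlim (p + 1) z him).norm.add_const (C / ‖z‖ ^ p * S)
  have hle : ∀ M : ℕ, ‖Complex.log M - ∑ m ∈ Finset.range M, 1 / (z + m + 1) - s19Q (p + 1) z‖
      ≤ ‖Complex.log M - s19Q (p + 1) (z + M)‖ + C / ‖z‖ ^ p * S := by
    intro M
    have tele : ∑ m ∈ Finset.range M, (1 / (z + m + 1) + s19J (p + 1) (z + m))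
        = s19Q (p + 1) (z + M) - s19Q (p + 1) z := by
      have := Finset.sum_range_sub (fun m : ℕ => s19Q (p + 1) (z + m)) M
      simp only [Nat.cast_zero, add_zero] at this
      rw [← this]
      refine Finset.sum_congr rfl fun m _ => ?_
      rw [← s19_Qstep p (z + m) (by simpa using him)]
      push_cast
      ring_nf
    rw [Finset.sum_add_distrib] at tele
    have e : Complex.log M - ∑ m ∈ Finset.range M, 1 / (z + m + 1) - s19Q (p + 1) z
        = (Complex.log M - s19Q (p + 1) (z + M)) + ∑ m ∈ Finset.range M, s19J (p + 1) (z + m) := by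
      linear_combination (-1 : ℂ) * tele
    rw [e]
    refine (norm_add_le _ _).trans ?_
    gcongr
    calc ‖∑ m ∈ Finset.range M, s19J (p + 1) (z + m)‖
        ≤ ∑ m ∈ Finset.range M, ‖s19J (p + 1) (z + m)‖ := norm_sum_le _ _
      _ ≤ ∑ m ∈ Finset.range M, C / ‖z‖ ^ p * (1 / ((m : ℝ) + 1) ^ 2) :=
          Finset.sum_le_sum fun m _ => (h z hz h1 m).trans (le_of_eq (by ring))
      _ = C / ‖z‖ ^ p * ∑ m ∈ Finset.range M, (1 / ((m : ℝ) + 1) ^ 2) := by rw [Finset.mul_sum]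
      _ ≤ C / ‖z‖ ^ p * S := by
          gcongr
          exact s19_sumsq.sum_le_tsum _ fun m _ => by positivity
  have := le_of_tendsto_of_tendsto' hA.norm hB hle
  rw [norm_zero, zero_add] at this
  refine this.trans ?_
  rw [div_mul_eq_mul_div]
  gcongr
  linarith

lemma s19_logs (w : ℂ) (hw : 0 < w.re) :
    Complex.log (Complex.I * w) + Complex.log (-(Complex.I * w)) = 2 * Complex.log w := by
  have hw0 : w ≠ 0 := by rintro rfl; simp at hw
  have harg := Complex.abs_arg_lt_pi_div_two_iff.2 (Or.inl hw)
  rw [abs_lt] at harg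
  have h1 : Complex.log (Complex.I * w) = Complex.log Complex.I + Complex.log w := by
    rw [Complex.log_mul_eq_add_log_iff Complex.I_ne_zero hw0, Complex.arg_I]
    constructor <;> linarith [Real.pi_pos]
  have h2 : Complex.log (-Complex.I * w) = Complex.log (-Complex.I) + Complex.log w := by
    rw [Complex.log_mul_eq_add_log_iff (neg_ne_zero.2 Complex.I_ne_zero) hw0, Complex.arg_neg_I]
    constructor <;> linarith [Real.pi_pos]
  rw [← neg_mul, h1, h2, Complex.log_I, Complex.log_neg_I]
  ring

lemma s19_Qavg (n : ℕ) (w : ℂ) (hw : 0 < w.re) :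
    (1 / 2) * (s19Q (2 * n + 1) (Complex.I * w) + s19Q (2 * n + 1) (-(Complex.I * w)))
     = Complex.log w - ∑ k ∈ Finset.range n, (-1) ^ (k + 1) * (bernoulli (2 * (k + 1)) : ℂ)
        / (2 * ((k : ℂ) + 1)) * (w ^ (2 * (k + 1)))⁻¹ := by
  have hw0 : w ≠ 0 := by rintro rfl; simp at hw
  induction n with
  | zero =>
    have := s19_logs w hw
    simp [s19Q]
    linear_combination (1 / 2) * this
  | succ n ih =>
    unfold s19Q at ih ⊢
    rw [Finset.sum_range_succ _ n, show 2 * (n + 1) + 1 = 2 * n + 1 + 1 + 1 by ring]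
    rw [Finset.sum_range_succ _ (2 * n + 1 + 1), Finset.sum_range_succ _ (2 * n + 1),
      Finset.sum_range_succ _ (2 * n + 1 + 1), Finset.sum_range_succ _ (2 * n + 1)]
    have e1 : (Complex.I * w) ^ (2 * n + 1 + 1) = (-1) ^ (n + 1) * w ^ (2 * (n + 1)) := by
      rw [show 2 * n + 1 + 1 = 2 * (n + 1) by ring, mul_pow, pow_mul, Complex.I_sq]
    have e2 : (-(Complex.I * w)) ^ (2 * n + 1 + 1) = (-1) ^ (n + 1) * w ^ (2 * (n + 1)) := by
      rw [← e1, Even.neg_pow ⟨n + 1, by ring⟩]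
    have e3 : (-(Complex.I * w)) ^ (2 * n + 1 + 1 + 1) = -(Complex.I * w) ^ (2 * n + 1 + 1 + 1) :=
      Odd.neg_pow ⟨n + 1, by ring⟩ _
    have e4 : (((-1 : ℂ)) ^ (n + 1))⁻¹ = (-1) ^ (n + 1) := by
      rw [← inv_pow]; norm_num
    rw [e1, e2, e3, inv_neg, mul_inv, e4]
    rw [show 2 * (n + 1) = 2 * n + 1 + 1 by ring]
    push_cast
    have e5 : (2 * (n : ℂ) + 1 + 1) = 2 * ((n : ℂ) + 1) := by ring
    rw [e5]
    simp only [div_eq_mul_inv] at ih ⊢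
    linear_combination ih

lemma s19_E (N : ℕ) (s : ℝ) (hs0 : 0 ≤ s) (hs : s < 1) : ∃ C > 0, ∀ w : ℂ,
    |w.im| ≤ s * ‖w‖ → 0 < w.re → 1 ≤ ‖w‖ →
      ‖Complex.log w - (1 / 2) * (digamma (Complex.I * w) + digamma (-(Complex.I * w)))
        - ∑ k ∈ Finset.range (N + 1), (-1) ^ (k + 1) * (bernoulli (2 * (k + 1)) : ℂ)
        / (2 * ((k : ℂ) + 1)) * (w ^ (2 * (k + 1)))⁻¹‖ ≤ C / ‖w‖ ^ (2 * N + 2) := by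
  obtain ⟨C, hC, h⟩ := s19_D (2 * N + 2) s hs0 hs
  refine ⟨C, hC, fun w him hre h1 => ?_⟩
  have hn : ‖Complex.I * w‖ = ‖w‖ := by simp
  have ha := h (Complex.I * w) (by rw [hn]; simp; exact (le_abs_self _).trans him)
    (by simp; exact hre.ne') (by rw [hn]; exact h1)
  have hb := h (-(Complex.I * w)) (by rw [norm_neg, hn]; simp; exact neg_le.1 ((neg_le_abs _).trans him))
    (by simp; exact hre.ne') (by rw [norm_neg, hn]; exact h1)
  rw [norm_neg, hn] at hb
  rw [hn] at ha
  have hQ := s19_Qavg (N + 1) w hre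
  rw [show 2 * (N + 1) + 1 = 2 * N + 2 + 1 by ring] at hQ
  set A := digamma (Complex.I * w) + 1 / (Complex.I * w) - s19Q (2 * N + 2 + 1) (Complex.I * w) with hA
  set B := digamma (-(Complex.I * w)) + 1 / (-(Complex.I * w)) - s19Q (2 * N + 2 + 1) (-(Complex.I * w)) with hB
  rw [div_neg] at hB
  have e : Complex.log w - (1 / 2) * (digamma (Complex.I * w) + digamma (-(Complex.I * w)))
        - ∑ k ∈ Finset.range (N + 1), (-1) ^ (k + 1) * (bernoulli (2 * (k + 1)) : ℂ)
        / (2 * ((k : ℂ) + 1)) * (w ^ (2 * (k + 1)))⁻¹ = -(1 / 2) * (A + B) := by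
    rw [hA, hB]
    linear_combination (-1 : ℂ) * hQ
  rw [e, norm_mul]
  have h12 : ‖(-(1 / 2) : ℂ)‖ = 1 / 2 := by norm_num
  rw [h12]
  linarith [norm_add_le A B]

lemma s19_zeta (k : ℕ) (y : ℂ) (hy : y ≠ 0) :
    HasSum (fun n : ℕ => (-1) ^ (k + 1) * (bernoulli (2 * (k + 1)) : ℂ)
        / (2 * ((k : ℂ) + 1)) * ((2 * (Real.pi : ℂ) * ((n : ℂ) + 1) / y) ^ (2 * (k + 1)))⁻¹)
      (-(1 / 2) * (((bernoulli (2 * (k + 1)) : ℂ) ^ 2 * y ^ (2 * (k + 1)))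
              / ((2 * ((k + 1 : ℕ) : ℂ)) * (Nat.factorial (2 * (k + 1)) : ℂ)))) := by
  have h := hasSum_zeta_nat (k := k + 1) (by omega)
  rw [← hasSum_nat_add_iff' 1] at h
  have h2 := (Complex.hasSum_ofReal.2 h).mul_left
    ((-1) ^ (k + 1) * (bernoulli (2 * (k + 1)) : ℂ) / (2 * ((k : ℂ) + 1))
      * (y ^ (2 * (k + 1)) / (2 * (Real.pi : ℂ)) ^ (2 * (k + 1))))
  have hpi : (Real.pi : ℂ) ≠ 0 := by exact_mod_cast Real.pi_ne_zero
  have hk : (k : ℂ) + 1 ≠ 0 := by exact_mod_cast Nat.succ_ne_zero k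
  have hf : (Nat.factorial (2 * (k + 1)) : ℂ) ≠ 0 := by exact_mod_cast Nat.factorial_ne_zero _
  convert! h2 using 1
  · funext n
    have hn : (n : ℂ) + 1 ≠ 0 := by exact_mod_cast Nat.succ_ne_zero n
    push_cast
    rw [div_pow, mul_pow _ ((n : ℂ) + 1)]
    field_simp
  · rw [show 2 * (k + 1) - 1 = 2 * k + 1 by omega]
    simp
    rw [show 2 * (k + 1) = 2 * k + 1 + 1 by ring]
    rw [show 2 * (k + 1) = 2 * k + 1 + 1 by ring] at hf
    have hm : ((-1 : ℂ) ^ (k + 1)) * (-1) ^ (k + 1 + 1) = -1 := by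
      rw [← pow_add]; exact Odd.neg_one_pow ⟨k + 1, by ring⟩
    rw [mul_pow, pow_succ (2 : ℂ) (2 * k + 1)]
    field_simp
    linear_combination (-(bernoulli (2 * k + 1 + 1) : ℂ) ^ 2) * hm

theorem stmt19 (N : ℕ) (hN : 1 ≤ N) (lam : ℝ) (hl : 0 < lam) (hl2 : lam < Real.pi / 2) :
    ∃ C > 0, ∃ r > 0, ∀ y : ℂ, 0 < ‖y‖ → ‖y‖ ≤ r → |Complex.arg y| ≤ lam →
      ‖(∑' n : ℕ, (Complex.log (2 * (Real.pi : ℂ) * ((n : ℂ) + 1) / y)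
            - (1/2) * (digamma (2 * (Real.pi : ℂ) * Complex.I * ((n : ℂ) + 1) / y)
              + digamma (-(2 * (Real.pi : ℂ) * Complex.I * ((n : ℂ) + 1) / y)))))
        + (1/2) * ∑ k ∈ Finset.Icc 1 N,
            ((bernoulli (2 * k) : ℂ) ^ 2 * y ^ (2 * k))
              / ((2 * (k : ℂ)) * (Nat.factorial (2 * k) : ℂ))‖
        ≤ C * ‖y‖ ^ (2 * N + 2) := by
  have hpi := Real.pi_pos
  have hs0 : 0 ≤ Real.sin lam := Real.sin_nonneg_of_nonneg_of_le_pi hl.le (by linarith)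
  have hs1 : Real.sin lam < 1 := by
    rw [← Real.sin_pi_div_two]
    exact Real.sin_lt_sin_of_lt_of_le_pi_div_two (by linarith) le_rfl hl2
  obtain ⟨C, hC, h⟩ := s19_E N (Real.sin lam) hs0 hs1
  set S := ∑' m : ℕ, 1 / ((m : ℝ) + 1) ^ 2 with hS
  have hS0 : 0 ≤ S := tsum_nonneg fun m => by positivity
  set b : ℕ → ℂ := fun k => (bernoulli (2 * k) : ℂ) ^ 2
    / ((2 * (k : ℂ)) * (Nat.factorial (2 * k) : ℂ)) with hb
  refine ⟨C * S + ‖b (N + 1)‖ + 1, by positivity, 1, one_pos, fun y hy0 hy1 harg => ?_⟩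
  have hy : y ≠ 0 := norm_pos_iff.1 hy0
  have hyre : 0 < y.re := by
    have := Complex.abs_arg_lt_pi_div_two_iff.1 (lt_of_le_of_lt harg hl2)
    exact this.resolve_right hy
  have hyim : |y.im| ≤ Real.sin lam * ‖y‖ := by
    have h1 := Complex.sin_arg y
    have h2 : |Real.sin y.arg| ≤ Real.sin lam := by
      rw [abs_le] at harg ⊢
      constructor
      · rw [← Real.sin_neg]
        exact Real.sin_le_sin_of_le_of_le_pi_div_two (by linarith) (by linarith) harg.1
      · exact Real.sin_le_sin_of_le_of_le_pi_div_two (by linarith) (by linarith) harg.2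
    rwa [h1, abs_div, abs_norm, div_le_iff₀ hy0] at h2
  set w : ℕ → ℂ := fun n => 2 * (Real.pi : ℂ) * ((n : ℂ) + 1) / y with hw
  have hwa : ∀ n, w n = ((2 * Real.pi * (n + 1) : ℝ) : ℂ) * y⁻¹ := fun n => by
    simp only [hw]; push_cast; rw [div_eq_mul_inv]
  have hwn : ∀ n, ‖w n‖ = 2 * Real.pi * (n + 1) / ‖y‖ := fun n => by
    rw [hwa, norm_mul, Complex.norm_real, norm_inv, Real.norm_of_nonneg (by positivity),
      div_eq_mul_inv]
  have hwge : ∀ n : ℕ, ((n : ℝ) + 1) / ‖y‖ ≤ ‖w n‖ := fun n => by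
    rw [hwn]
    gcongr
    nlinarith [Real.pi_gt_three, (Nat.cast_nonneg n : (0:ℝ) ≤ n)]
  have hnsq : Complex.normSq y = ‖y‖ ^ 2 := Complex.normSq_eq_norm_sq y
  have hwre : ∀ n, 0 < (w n).re := fun n => by
    rw [hwa, Complex.re_ofReal_mul, Complex.inv_re, hnsq]
    positivity
  have hwim : ∀ n, |(w n).im| ≤ Real.sin lam * ‖w n‖ := fun n => by
    rw [hwn, hwa, Complex.im_ofReal_mul, Complex.inv_im, hnsq, abs_mul, abs_div, abs_neg,
      abs_of_nonneg (by positivity : (0:ℝ) ≤ 2 * Real.pi * (n + 1)),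
      abs_of_nonneg (by positivity : (0:ℝ) ≤ ‖y‖ ^ 2)]
    calc 2 * Real.pi * (n + 1) * (|y.im| / ‖y‖ ^ 2)
        ≤ 2 * Real.pi * (n + 1) * (Real.sin lam * ‖y‖ / ‖y‖ ^ 2) := by gcongr
      _ = _ := by field_simp
  have hw1 : ∀ n, 1 ≤ ‖w n‖ := fun n => by
    refine le_trans ?_ (hwge n)
    rw [le_div_iff₀ hy0]
    linarith [(Nat.cast_nonneg n : (0:ℝ) ≤ n)]
  set T : ℕ → ℂ := fun n => Complex.log (2 * (Real.pi : ℂ) * ((n : ℂ) + 1) / y)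
            - (1/2) * (digamma (2 * (Real.pi : ℂ) * Complex.I * ((n : ℂ) + 1) / y)
              + digamma (-(2 * (Real.pi : ℂ) * Complex.I * ((n : ℂ) + 1) / y))) with hT
  have hTw : ∀ n, T n = Complex.log (w n) - (1 / 2) * (digamma (Complex.I * w n)
      + digamma (-(Complex.I * w n))) := fun n => by
    have e : 2 * (Real.pi : ℂ) * Complex.I * ((n : ℂ) + 1) / y = Complex.I * w n := by
      simp only [hw]; ring
    simp only [hT]
    rw [e]
  set G : ℕ → ℂ := fun n => ∑ k ∈ Finset.range (N + 1),
    (-1) ^ (k + 1) * (bernoulli (2 * (k + 1)) : ℂ)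
        / (2 * ((k : ℂ) + 1)) * ((w n) ^ (2 * (k + 1)))⁻¹ with hG
  have hGsum : HasSum G (∑ k ∈ Finset.range (N + 1), -(1 / 2) * (b (k + 1) * y ^ (2 * (k + 1)))) := by
    refine hasSum_sum fun k _ => ?_
    convert s19_zeta k y hy using 1
    simp only [hb]
    ring
  have hebound : ∀ n, ‖T n - G n‖ ≤ C * ‖y‖ ^ (2 * N + 2) * (1 / ((n : ℝ) + 1) ^ 2) := fun n => by
    have h1 := h (w n) (hwim n) (hwre n) (hw1 n)
    rw [← hTw] at h1
    refine h1.trans ?_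
    have hn1 : (1:ℝ) ≤ (n : ℝ) + 1 := by linarith [(Nat.cast_nonneg n : (0:ℝ) ≤ n)]
    calc C / ‖w n‖ ^ (2 * N + 2) ≤ C / (((n : ℝ) + 1) / ‖y‖) ^ (2 * N + 2) := by
          gcongr
          exact hwge n
      _ = C * ‖y‖ ^ (2 * N + 2) * (1 / ((n : ℝ) + 1) ^ (2 * N + 2)) := by
          rw [div_pow]; field_simp
      _ ≤ _ := by
          gcongr
          omega
  have hbs := s19_sumsq.mul_left (C * ‖y‖ ^ (2 * N + 2))
  have hes : Summable fun n => T n - G n := Summable.of_norm_bounded hbs hebound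
  have het : ‖∑' n, (T n - G n)‖ ≤ C * ‖y‖ ^ (2 * N + 2) * S := by
    refine (tsum_of_norm_bounded hbs.hasSum hebound).trans (le_of_eq ?_)
    rw [tsum_mul_left]
  have hTs : ∑' n, T n = ∑' n, (T n - G n)
      + ∑ k ∈ Finset.range (N + 1), -(1 / 2) * (b (k + 1) * y ^ (2 * (k + 1))) := by
    rw [← hGsum.tsum_eq, ← hes.tsum_add hGsum.summable]
    simp
  have hfin : ∑ k ∈ Finset.Icc 1 N, ((bernoulli (2 * k) : ℂ) ^ 2 * y ^ (2 * k))
      / ((2 * (k : ℂ)) * (Nat.factorial (2 * k) : ℂ))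
      = ∑ k ∈ Finset.range N, b (k + 1) * y ^ (2 * (k + 1)) := by
    rw [Finset.range_eq_Ico, Finset.sum_Ico_add' (fun k => b k * y ^ (2 * k)) 0 N 1]
    refine Finset.sum_congr (by ext; simp) fun k _ => ?_
    simp only [hb]
    ring
  rw [hTs, hfin, ← Finset.mul_sum, Finset.sum_range_succ]
  have e : ∀ a c d : ℂ, a + -(1 / 2) * (c + d) + 1 / 2 * c = a + -(1 / 2) * d := fun a c d => by ring
  rw [e]
  refine (norm_add_le _ _).trans ?_
  have h12 : ‖(-(1 / 2) : ℂ)‖ = 1 / 2 := by norm_num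
  rw [norm_mul, norm_mul, norm_pow, h12, show 2 * (N + 1) = 2 * N + 2 by ring]
  have hyp : 0 ≤ ‖y‖ ^ (2 * N + 2) := by positivity
  have := mul_nonneg (norm_nonneg (b (N + 1))) hyp
  nlinarith
end
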